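/- arXiv:2307.12164 — 2 statements merged into one kernel-verified Lean document; each statement's English description precedes it below -/
import Mathlib

section
/- Let a, b ∈ ℂ with a ∉ ℤ, b ∉ ℤ, and a+b ∉ ℤ, and let ξ ∈ (0,1). Define w_{1,0}(ξ) = ₂F₁(a,b;a+b;ξ), w_{1,1}(ξ) = ₂F₁(a,b;1;1-ξ), and w_{2,1}^{ln}(ξ) = ₂F₁(a,b;1;1-ξ) · ln(1-ξ) + Σ_{n=1}^∞ ((a)_n (b)_n/(n!)²) (1-ξ)^n [ψ(a+n)-ψ(a)+ψ(b+n)-ψ(b)-2ψ(n+1)-2γ_E]. Then cot(πa)+cot(πb) ≠ 0 and w_{1,0}(ξ) = -( Γ(1-a)Γ(1-b)/(Γ(1-a-b) · π (cot(πa)+cot(πb))) ) · ( [ψ(a)+ψ(b)+2γ_E] · w_{1,1}(ξ) + w_{2,1}^{ln}(ξ) ). -/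
/-!
The proof compares two solutions of the hypergeometric equation with `c = a + b`. Write `x = 1 - ξ`,
`y = Γ(a)Γ(b)/Γ(a+b) · ₂F₁(a,b;a+b;·)`, `u = ₂F₁(a,b;1;·)`, and let `v` be the power series with
coefficients `(a)_n (b)_n / (n!)² · (ψ(a+n) + ψ(b+n) - 2ψ(n+1))`. The right-hand bracket of the
theorem is `u(x) log x + v(x)` (`bracket_eq`), and by the reflection formula the constant in front
of it is `Γ(a+b)/(Γ(a)Γ(b))` (`gamma_const_eq`). Thus the claim is that
`D(x) = y(1 - x) + u(x) log x + v(x)` vanishes (`y_add_eq_zero`).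

Coefficient recurrences show that `D` solves the hypergeometric equation with `c = 1` on the lens
`|x| < 1`, `|1 - x| < 1`. If `D → 0` and `x D' → 0` as `x → 0+`, then the Wronskian of `D` with the
regular solution `u`, multiplied by `x (1 - x)^(a+b)`, is constant and tends to `0`; so `D` is a
multiple of `u`, and the multiple is `0` (`eq_zero_of_ode`).

The two limits come from Abel's theorem. With `t_n` the coefficients of `y`, `n t_n → 1` gives
`(1 - ξ) y'(ξ) → 1` (`tendsto_dy`). The essential point is the constant in
`y(ξ) = -log (1 - ξ) - (ψ(a) + ψ(b) + 2γ) + o(1)`, that is, the value of `∑ (t_n - 1/n)`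
(`tendsto_sum_tco`). Replacing `a` by `a + 1` changes `t_n` by a telescoping amount, the total
change being `-1/a`. For `Re a, Re b ≥ 1`, iterating this infinitely often for `a` and for `1`
simultaneously evaluates `∑ (t_n(a,b) - t_n(1,b))` as the digamma series; since
`t_n(1,b) = 1/(b+n)`, a second digamma series finishes this case, and finitely many shifts give
the general one.
-/

open Complex

/-- The Pochhammer symbol `(u)_n = ∏_{j=0}^{n-1} (u+j)` for complex `u`. -/
noncomputable def cpoch (u : ℂ) (n : ℕ) : ℂ := ∏ j ∈ Finset.range n, (u + (j : ℂ))

/-- The Gauss hypergeometric series `₂F₁(a,b;c;ξ)`. -/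
noncomputable def hyp2F1 (a b c ξ : ℂ) : ℂ :=
  ∑' n : ℕ, cpoch a n * cpoch b n / (cpoch c n * (n.factorial : ℂ)) * ξ ^ n

/-- The digamma function `ψ = Γ'/Γ`. -/
noncomputable def cdigamma (z : ℂ) : ℂ := deriv Complex.Gamma z / Complex.Gamma z

/-- The Euler–Mascheroni constant, `γ_E = -ψ(1)`. -/
noncomputable def eulerGammaC : ℂ := -cdigamma 1

/-- The logarithmic solution `w_{2,1}^{ln}` of the hypergeometric equation with `c = a+b`
at the endpoint `ξ = 1`. -/
noncomputable def w21ln (a b : ℂ) (ξ : ℝ) : ℂ :=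
  hyp2F1 a b 1 ((1 - ξ : ℝ) : ℂ) * ((Real.log (1 - ξ) : ℝ) : ℂ) +
    ∑' n : ℕ,
      cpoch a (n + 1) * cpoch b (n + 1) / (((n + 1).factorial : ℂ)) ^ 2 *
          (((1 - ξ : ℝ) : ℂ)) ^ (n + 1) *
        (cdigamma (a + ((n : ℂ) + 1)) - cdigamma a + cdigamma (b + ((n : ℂ) + 1)) -
          cdigamma b - 2 * cdigamma ((n : ℂ) + 2) - 2 * eulerGammaC)

open Filter Topology Finset

/-! ### The digamma function -/

lemma cdigamma_add_one {s : ℂ} (hs : ∀ m : ℕ, s ≠ -m) :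
    cdigamma (s + 1) = cdigamma s + 1 / s := by
  have h := Complex.digamma_apply_add_one s hs
  simp only [Complex.digamma_def, logDeriv_apply] at h
  rw [one_div]
  exact h

lemma eulerGammaC_eq : eulerGammaC = Real.eulerMascheroniConstant := by
  have h := Complex.digamma_one
  simp only [Complex.digamma_def, logDeriv_apply] at h
  rw [eulerGammaC, cdigamma, h, neg_neg]

lemma Gamma_add_nat {s : ℂ} (hs : ∀ m : ℕ, s ≠ -m) (n : ℕ) :
    Complex.Gamma (s + n) = Complex.Gamma s * cpoch s n := by
  induction n with
  | zero => simp [cpoch]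
  | succ n ih =>
    have h0 : s + n ≠ 0 := fun h => hs n (eq_neg_of_add_eq_zero_left h)
    rw [cpoch, Finset.prod_range_succ, ← cpoch, Nat.cast_succ, ← add_assoc,
      Complex.Gamma_add_one _ h0, ih]
    ring

lemma ne_neg_nat_of_re_pos {s : ℂ} (hs : 0 < s.re) (m : ℕ) : s ≠ -m := by
  intro h
  have := congrArg Complex.re h
  simp at this
  have : (0 : ℝ) ≤ m := Nat.cast_nonneg m
  linarith

/-- Weierstrass form of the Gamma function on the right half-plane, with the product written as
the exponential of a sum of logarithms. -/
lemma digamma_aux_exp {s : ℂ} (hs : 0 < s.re) {l : ℂ}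
    (hl : Tendsto (fun N => ∑ n ∈ range N,
      ((s - 1) / (n + 1) - (Complex.log (s + n) - Complex.log (1 + n)))) atTop (𝓝 l)) :
    Complex.Gamma s = Complex.exp (l - (s - 1) * Real.eulerMascheroniConstant) := by
  have hne : ∀ n : ℕ, s + n ≠ 0 := fun n h =>
    ne_neg_nat_of_re_pos hs n (eq_neg_of_add_eq_zero_left h)
  have hγ : Tendsto (fun N : ℕ => (((harmonic N : ℝ) - Real.log N : ℝ) : ℂ)) atTop
      (𝓝 (Real.eulerMascheroniConstant : ℂ)) :=
    (Complex.continuous_ofReal.tendsto _).comp Real.tendsto_harmonic_sub_log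
  have h1 := (Complex.continuous_exp.tendsto _).comp (hl.sub (hγ.const_mul (s - 1)))
  have h2 : Tendsto (fun N : ℕ => Complex.GammaSeq s N * ((s + N) / N)) atTop
      (𝓝 (Complex.Gamma s * 1)) := by
    refine (Complex.GammaSeq_tendsto_Gamma s).mul ?_
    have h3 : Tendsto (fun N : ℕ => s * ((N : ℂ))⁻¹ + 1) atTop (𝓝 (s * 0 + 1)) :=
      ((tendsto_inv_atTop_nhds_zero_nat (𝕜 := ℂ)).const_mul s).add_const 1
    rw [mul_zero, zero_add] at h3
    refine h3.congr' ?_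
    filter_upwards [eventually_ge_atTop 1] with N hN
    have : (N : ℂ) ≠ 0 := by exact_mod_cast (by omega : N ≠ 0)
    field_simp
  rw [mul_one] at h2
  refine tendsto_nhds_unique h2 (h1.congr' ?_)
  filter_upwards [eventually_ge_atTop 1] with N hN
  have hN0 : (N : ℂ) ≠ 0 := by exact_mod_cast (by omega : N ≠ 0)
  have e1 : ∑ n ∈ range N, ((s - 1) / ((n : ℂ) + 1) - (Complex.log (s + n) - Complex.log (1 + n)))
      = (s - 1) * ((harmonic N : ℝ) : ℂ)
        - (∑ n ∈ range N, Complex.log (s + n) - ∑ n ∈ range N, Complex.log (1 + n)) := by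
    rw [sum_sub_distrib, sum_sub_distrib, harmonic]
    push_cast
    rw [mul_sum]
    simp only [div_eq_mul_inv]
  have e2 : Complex.exp (∑ n ∈ range N, Complex.log (s + n)) = ∏ n ∈ range N, (s + n) := by
    rw [Complex.exp_sum]
    exact prod_congr rfl fun n _ => Complex.exp_log (hne n)
  have e3 : Complex.exp (∑ n ∈ range N, Complex.log (1 + n)) = (N.factorial : ℂ) := by
    rw [Complex.exp_sum, ← prod_range_add_one_eq_factorial]
    push_cast
    refine prod_congr rfl fun n _ => ?_
    rw [Complex.exp_log, add_comm]
    exact_mod_cast (by omega : 1 + n ≠ 0)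
  have e4 : Complex.exp ((s - 1) * ((Real.log N : ℝ) : ℂ)) = (N : ℂ) ^ s / N := by
    rw [show (N : ℂ) ^ s / N = (N : ℂ) ^ (s - 1) by rw [Complex.cpow_sub _ _ hN0, Complex.cpow_one],
      Complex.cpow_def_of_ne_zero hN0, mul_comm,
      Complex.ofReal_log (Nat.cast_nonneg N), Complex.ofReal_natCast]
  have e5 : (s - 1) * ((harmonic N : ℝ) : ℂ)
        - (∑ n ∈ range N, Complex.log (s + n) - ∑ n ∈ range N, Complex.log (1 + n))
        - (s - 1) * (((harmonic N : ℝ) - Real.log N : ℝ) : ℂ)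
      = (s - 1) * ((Real.log N : ℝ) : ℂ) + ∑ n ∈ range N, Complex.log (1 + n)
        - ∑ n ∈ range N, Complex.log (s + n) := by
    push_cast; ring
  simp only [Function.comp]
  rw [e1, e5, Complex.exp_sub, Complex.exp_add, e2, e3, e4, Complex.GammaSeq, prod_range_succ]
  have := hne N
  have hp : ∏ n ∈ range N, (s + (n : ℂ)) ≠ 0 := prod_ne_zero_iff.mpr fun n _ => hne n
  field_simp

/-- The classical series `ψ(s) = -γ + ∑ (1/(n+1) - 1/(s+n))`. -/
lemma hasSum_digamma {s : ℂ} (hs : 1 ≤ s.re) :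
    HasSum (fun n : ℕ => 1 / ((n : ℂ) + 1) - 1 / (s + n)) (cdigamma s + eulerGammaC) := by
  set R : ℝ := ‖s‖ + 2
  set U : Set ℂ := {z | 1 / 2 < z.re} ∩ Metric.ball 0 R
  have hUo : IsOpen U := (isOpen_lt continuous_const Complex.continuous_re).inter Metric.isOpen_ball
  have hUc : IsPreconnected U :=
    ((convex_halfSpace_re_gt (1 / 2)).inter (convex_ball 0 R)).isPreconnected
  have hsU : s ∈ U := ⟨by simp only [Set.mem_ofPred_eq]; linarith, by simp [R]⟩
  have h1U : (1 : ℂ) ∈ U := by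
    refine ⟨by norm_num, ?_⟩
    simp only [Metric.mem_ball, dist_zero_right, norm_one, R]
    linarith [norm_nonneg s]
  set f : ℕ → ℂ → ℂ := fun n z => (z - 1) / (n + 1) - (Complex.log (z + n) - Complex.log (1 + n))
  set f' : ℕ → ℂ → ℂ := fun n z => 1 / ((n : ℂ) + 1) - 1 / (z + n)
  have hd : ∀ (n : ℕ) (z : ℂ), z ∈ U → HasDerivAt (f n) (f' n z) z := by
    intro n z hz
    have hz1 : 0 < (z + n).re := by
      have := hz.1
      simp only [Set.mem_ofPred_eq] at this
      have h0 : (0 : ℝ) ≤ n := Nat.cast_nonneg n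
      simp; linarith
    have h1 : HasDerivAt (fun z : ℂ => (z - 1) / ((n : ℂ) + 1)) (1 / ((n : ℂ) + 1)) z :=
      ((hasDerivAt_id z).sub_const 1).div_const _
    have h2 : HasDerivAt (fun z : ℂ => Complex.log (z + n)) (1 / (z + n)) z :=
      ((hasDerivAt_id z).add_const (n : ℂ)).clog (Or.inl hz1)
    exact h1.sub (h2.sub_const _)
  have hb : ∀ (n : ℕ) (z : ℂ), z ∈ U → ‖f' n z‖ ≤ (R + 1) * 2 * (1 / ((n + 1 : ℕ) : ℝ) ^ 2) := by
    intro n z hz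
    have hz1 := hz.1
    have hz2 : ‖z‖ < R := by simpa using hz.2
    simp only [Set.mem_ofPred_eq] at hz1
    have hre : (1 / 2 + n : ℝ) ≤ ‖z + n‖ := by
      refine le_trans ?_ (Complex.re_le_norm _)
      simp; linarith
    have h0 : (0 : ℝ) ≤ n := Nat.cast_nonneg n
    have hne : z + n ≠ 0 := norm_pos_iff.mp (by linarith)
    have hn1 : (n : ℂ) + 1 ≠ 0 := by exact_mod_cast Nat.succ_ne_zero n
    have e : f' n z = (z - 1) / (((n : ℂ) + 1) * (z + n)) := by
      simp only [f']; field_simp; ring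
    have hnn : ‖(n : ℂ) + 1‖ = n + 1 := by exact_mod_cast Complex.norm_natCast (n + 1)
    rw [e, norm_div, norm_mul, hnn, div_le_iff₀ (by positivity)]
    have h3 : ‖z - 1‖ ≤ R + 1 := (norm_sub_le _ _).trans (by rw [norm_one]; linarith)
    refine h3.trans ?_
    have hR : 0 ≤ R + 1 := by linarith [norm_nonneg z]
    have h4 : 1 ≤ 2 * (1 / ((n + 1 : ℕ) : ℝ) ^ 2) * (((n : ℝ) + 1) * ‖z + n‖) := by
      push_cast
      have : 2 * (1 / ((n : ℝ) + 1) ^ 2) * (((n : ℝ) + 1) * ‖z + n‖) = 2 * ‖z + n‖ / (n + 1) := by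
        field_simp
      rw [this, le_div_iff₀ (by positivity)]
      linarith
    calc R + 1 = (R + 1) * 1 := by ring
      _ ≤ (R + 1) * (2 * (1 / ((n + 1 : ℕ) : ℝ) ^ 2) * (((n : ℝ) + 1) * ‖z + n‖)) := by gcongr
      _ = _ := by ring
  have hu : Summable (fun n : ℕ => (R + 1) * 2 * (1 / ((n + 1 : ℕ) : ℝ) ^ 2)) :=
    ((summable_nat_add_iff 1).mpr (Real.summable_one_div_nat_pow.mpr one_lt_two)).mul_left _
  have hf1 : Summable fun n => f n 1 := by
    have : (fun n => f n 1) = fun _ => 0 := by ext n; simp [f]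
    rw [this]; exact summable_zero
  have hder := hasDerivAt_tsum_of_isPreconnected hu hUo hUc hd hb h1U hf1 hsU
  have hsum : ∀ z ∈ U, Summable fun n => f n z := fun z hz =>
    summable_of_summable_hasDerivAt_of_isPreconnected hu hUo hUc hd hb h1U hf1 hz
  have hGam : ∀ z ∈ U, Complex.Gamma z
      = Complex.exp ((∑' n, f n z) - (z - 1) * Real.eulerMascheroniConstant) := fun z hz =>
    digamma_aux_exp (by have := hz.1; simp only [Set.mem_ofPred_eq] at this; linarith)
      (hsum z hz).hasSum.tendsto_sum_nat
  have hder2 : HasDerivAt Complex.Gamma (Complex.Gamma s *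
      ((∑' n, f' n s) - 1 * Real.eulerMascheroniConstant)) s := by
    rw [hGam s hsU]
    refine HasDerivAt.congr_of_eventuallyEq ?_
      (Filter.eventuallyEq_of_mem (hUo.mem_nhds hsU) hGam)
    exact (hder.sub (((hasDerivAt_id s).sub_const 1).mul_const _)).cexp
  have hG0 : Complex.Gamma s ≠ 0 := Complex.Gamma_ne_zero_of_re_pos (by linarith)
  have hs' : Summable fun n => f' n s := Summable.of_norm_bounded hu fun n => hb n s hsU
  have : cdigamma s + eulerGammaC = ∑' n, f' n s := by
    rw [cdigamma, hder2.deriv, eulerGammaC_eq]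
    field_simp
    ring
  rw [this]
  exact hs'.hasSum

/-! ### The value of the renormalised series at the singular point -/

/-- `Γ(a+n)Γ(b+n) / (Γ(c+n)Γ(d+n)) → 1` when `a + b = c + d`; the index is shifted by one so that
the terms are quotients of Euler's approximations to the Gamma function. -/
lemma tendsto_Gamma_quot {a b c d : ℂ} (ha : ∀ m : ℕ, a ≠ -m) (hb : ∀ m : ℕ, b ≠ -m)
    (hc : ∀ m : ℕ, c ≠ -m) (hd : ∀ m : ℕ, d ≠ -m) (h : a + b = c + d) :
    Tendsto (fun n : ℕ => Complex.Gamma (a + (n + 1 : ℕ)) * Complex.Gamma (b + (n + 1 : ℕ)) /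
      (Complex.Gamma (c + (n + 1 : ℕ)) * Complex.Gamma (d + (n + 1 : ℕ)))) atTop (𝓝 1) := by
  have key : ∀ {s : ℂ}, (∀ m : ℕ, s ≠ -m) → Tendsto (fun n : ℕ => Complex.Gamma s /
      Complex.GammaSeq s n) atTop (𝓝 1) := by
    intro s hs
    have h0 := Complex.Gamma_ne_zero hs
    have := (tendsto_const_nhds (x := Complex.Gamma s)).div (Complex.GammaSeq_tendsto_Gamma s) h0
    rwa [div_self h0] at this
  have hlim := ((key ha).mul (key hb)).div ((key hc).mul (key hd)) (by norm_num)
  rw [mul_one, div_one] at hlim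
  refine hlim.congr' ?_
  filter_upwards [eventually_ge_atTop 1] with n hn
  have hn0 : (n : ℂ) ≠ 0 := by exact_mod_cast (by omega : n ≠ 0)
  have hf : (n.factorial : ℂ) ≠ 0 := by exact_mod_cast n.factorial_ne_zero
  have hseq : ∀ s : ℂ, Complex.GammaSeq s n = (n : ℂ) ^ s * n.factorial / cpoch s (n + 1) :=
    fun s => rfl
  have hpow : (n : ℂ) ^ d = (n : ℂ) ^ a * (n : ℂ) ^ b / (n : ℂ) ^ c := by
    rw [← Complex.cpow_add _ _ hn0, ← Complex.cpow_sub _ _ hn0, h, add_sub_cancel_left]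
  have hp : ∀ {s : ℂ}, (∀ m : ℕ, s ≠ -m) → cpoch s (n + 1) ≠ 0 := fun hs =>
    prod_ne_zero_iff.mpr fun j _ h => hs j (eq_neg_of_add_eq_zero_left h)
  have hz : ∀ s : ℂ, (n : ℂ) ^ s ≠ 0 := fun s => by simp [Complex.cpow_eq_zero_iff, hn0]
  rw [Gamma_add_nat ha, Gamma_add_nat hb, Gamma_add_nat hc, Gamma_add_nat hd]
  simp only [Pi.div_apply, hseq]
  rw [hpow]
  have := hp ha; have := hp hb; have := hp hc; have := hp hd
  have := hz a; have := hz b; have := hz c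
  have := Complex.Gamma_ne_zero ha; have := Complex.Gamma_ne_zero hb
  have := Complex.Gamma_ne_zero hc; have := Complex.Gamma_ne_zero hd
  field_simp

/-- The Taylor coefficients at `0` of `Γ(a)Γ(b)/Γ(a+b) · ₂F₁(a,b;a+b;·)`. -/
noncomputable def tco (a b : ℂ) (n : ℕ) : ℂ :=
  Complex.Gamma (a + n) * Complex.Gamma (b + n) / (Complex.Gamma (a + b + n) * n.factorial)

lemma tco_comm (a b : ℂ) (n : ℕ) : tco a b n = tco b a n := by
  rw [tco, tco, add_comm a b]; ring

lemma add_nat_ne {s : ℂ} (hs : ∀ m : ℕ, s ≠ -m) (n : ℕ) : s + n ≠ 0 :=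
  fun h => hs n (eq_neg_of_add_eq_zero_left h)

lemma add_nat_ne_neg {s : ℂ} (hs : ∀ m : ℕ, s ≠ -m) (n m : ℕ) : s + n ≠ -m := by
  intro h
  apply hs (n + m)
  push_cast
  linear_combination h

lemma tco_succ {a b : ℂ} (ha : ∀ m : ℕ, a ≠ -m) (hb : ∀ m : ℕ, b ≠ -m)
    (hab : ∀ m : ℕ, a + b ≠ -m) (n : ℕ) :
    ((n : ℂ) + 1) * (a + b + n) * tco a b (n + 1) = (a + n) * (b + n) * tco a b n := by
  have h1 := add_nat_ne ha n
  have h2 := add_nat_ne hb n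
  have h3 := add_nat_ne hab n
  have hG : Complex.Gamma (a + b + n) ≠ 0 := Complex.Gamma_ne_zero (add_nat_ne_neg hab n)
  have hf : (n.factorial : ℂ) ≠ 0 := by exact_mod_cast n.factorial_ne_zero
  have hn : (n : ℂ) + 1 ≠ 0 := by exact_mod_cast n.succ_ne_zero
  simp only [tco, Nat.factorial_succ]
  push_cast
  simp only [← add_assoc]
  rw [Complex.Gamma_add_one _ h1, Complex.Gamma_add_one _ h2, Complex.Gamma_add_one _ h3]
  field_simp

lemma tendsto_mul_tco {a b : ℂ} (ha : ∀ m : ℕ, a ≠ -m) (hb : ∀ m : ℕ, b ≠ -m)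
    (hab : ∀ m : ℕ, a + b ≠ -m) : Tendsto (fun n : ℕ => (n : ℂ) * tco a b n) atTop (𝓝 1) := by
  have e1 : ∀ {s : ℂ}, (∀ m : ℕ, s ≠ -m) → ∀ m : ℕ, s + 1 ≠ -m := fun hs m => by
    have := add_nat_ne_neg hs 1 m
    simpa using this
  have h := tendsto_Gamma_quot (e1 ha) (e1 hb) (e1 hab) (d := 1)
    (ne_neg_nat_of_re_pos (by simp)) (by ring)
  refine (tendsto_add_atTop_iff_nat 2).mp (h.congr fun n => ?_)
  have hg : Complex.Gamma (1 + (n + 1 : ℕ)) = ((n + 1).factorial : ℂ) := by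
    rw [add_comm, Complex.Gamma_nat_eq_factorial]
  have hf : ((n + 1).factorial : ℂ) ≠ 0 := by exact_mod_cast (n + 1).factorial_ne_zero
  have hn : (n : ℂ) + 2 ≠ 0 := by exact_mod_cast (by omega : n + 2 ≠ 0)
  rw [hg, tco, Nat.factorial_succ (n + 1)]
  have c : ∀ s : ℂ, s + 1 + ((n + 1 : ℕ) : ℂ) = s + ((n + 2 : ℕ) : ℂ) := fun s => by
    push_cast; ring
  rw [c, c, c]
  have hG : Complex.Gamma (a + b + (n + 2 : ℕ)) ≠ 0 :=
    Complex.Gamma_ne_zero (add_nat_ne_neg hab _)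
  push_cast at hG hf ⊢
  have hn' : (n : ℂ) + 1 + 1 ≠ 0 := by convert hn using 1; ring
  field_simp
  ring

/-- The difference of the partial sums for `(a+1,b)` and `(a,b)` telescopes. -/
lemma sum_tco_shift {a b : ℂ} (ha : ∀ m : ℕ, a ≠ -m) (hb : ∀ m : ℕ, b ≠ -m)
    (hab : ∀ m : ℕ, a + b ≠ -m) (N : ℕ) :
    ∑ n ∈ range N, (tco (a + 1) b n - tco a b n) = -(1 / a) * (N * tco a b N) := by
  have ha0 : a ≠ 0 := by simpa using ha 0
  induction N with
  | zero => simp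
  | succ n ih =>
    rw [sum_range_succ, ih]
    have hrec := tco_succ ha hb hab n
    have h1 := add_nat_ne ha n
    have h3 := add_nat_ne hab n
    have hG : Complex.Gamma (a + b + n) ≠ 0 := Complex.Gamma_ne_zero (add_nat_ne_neg hab n)
    have hf : (n.factorial : ℂ) ≠ 0 := by exact_mod_cast n.factorial_ne_zero
    have e : tco (a + 1) b n = (a + n) / (a + b + n) * tco a b n := by
      rw [tco, tco, add_right_comm a 1, show a + 1 + b + n = a + b + n + 1 by ring,
        Complex.Gamma_add_one _ h1, Complex.Gamma_add_one _ h3]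
      field_simp
    have e2 : ((n : ℂ) + 1) * tco a b (n + 1) = (a + n) * (b + n) * tco a b n / (a + b + n) := by
      rw [eq_div_iff h3, ← hrec]; ring
    push_cast
    rw [e, e2]
    field_simp
    ring

lemma sum_inv_telescope (N : ℕ) :
    ∑ n ∈ range N, (1 / ((n : ℂ) + 1) - 1 / (n : ℂ)) = 1 / (N : ℂ) := by
  induction N with
  | zero => simp
  | succ n ih => rw [sum_range_succ, ih]; push_cast; ring

/-- A sequence with increments `O(1/n²)` is within `O(1/n)` of its limit. -/
lemma norm_sub_one_le {ρ : ℕ → ℂ} {C : ℝ} (hρ : Tendsto ρ atTop (𝓝 1)) (hC : 0 ≤ C)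
    (hinc : ∀ n, ‖ρ (n + 1) - ρ n‖ ≤ C * (1 / ((n : ℝ) + 1) - 1 / ((n : ℝ) + 2))) (n : ℕ) :
    ‖ρ n - 1‖ ≤ C / (n + 1) := by
  have h : ∀ k : ℕ, ‖ρ n - ρ (n + k)‖ ≤
      C * (1 / ((n : ℝ) + 1) - 1 / (((n + k : ℕ) : ℝ) + 1)) := by
    intro k
    induction k with
    | zero => simp
    | succ k ih =>
      have h1 := hinc (n + k)
      have : ρ n - ρ (n + (k + 1)) = (ρ n - ρ (n + k)) - (ρ (n + k + 1) - ρ (n + k)) := by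
        rw [add_assoc]; ring
      rw [this]
      refine (norm_sub_le _ _).trans ((add_le_add ih h1).trans (le_of_eq ?_))
      push_cast
      ring
  have hl : Tendsto (fun k => ‖ρ n - ρ (n + k)‖) atTop (𝓝 ‖ρ n - 1‖) := by
    have h2 : Tendsto (fun k => ρ (n + k)) atTop (𝓝 1) := by
      simpa only [add_comm n] using (tendsto_add_atTop_iff_nat n).mpr hρ
    exact (tendsto_const_nhds.sub h2).norm
  refine le_of_tendsto hl (Eventually.of_forall fun k => (h k).trans ?_)
  rw [div_eq_mul_one_div C]
  have : (0 : ℝ) ≤ 1 / (((n + k : ℕ) : ℝ) + 1) := by positivity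
  exact mul_le_mul_of_nonneg_left (by linarith) hC

/-- The bound holds because `Γ(b+n)/n!` is nondecreasing in modulus for `Re b ≥ 1`. -/
lemma tco_one_add_nat_le {b : ℂ} (hb : 1 ≤ b.re) (M n : ℕ) :
    ‖tco (1 + M) b n‖ ≤ 1 / ((M : ℝ) + n + 1) := by
  have hb' : ∀ m : ℕ, b ≠ -m := ne_neg_nat_of_re_pos (by linarith)
  set q : ℕ → ℝ := fun k => ‖Complex.Gamma (b + k)‖ / k.factorial
  have hq0 : ∀ k, 0 < q k := fun k =>
    div_pos (norm_pos_iff.mpr (Complex.Gamma_ne_zero (add_nat_ne_neg hb' k)))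
      (by exact_mod_cast k.factorial_pos)
  have hq : Monotone q := by
    refine monotone_nat_of_le_succ fun k => ?_
    simp only [q]
    push_cast
    rw [← add_assoc, Complex.Gamma_add_one _ (add_nat_ne hb' k), norm_mul, Nat.factorial_succ]
    have hf : (0 : ℝ) < k.factorial := by exact_mod_cast k.factorial_pos
    have h1 : (k : ℝ) + 1 ≤ ‖b + k‖ := by
      refine le_trans ?_ (Complex.re_le_norm _)
      simp; linarith
    rw [div_le_div_iff₀ hf (by positivity)]
    push_cast
    have := mul_le_mul_of_nonneg_right h1
      (mul_nonneg (norm_nonneg (Complex.Gamma (b + k))) hf.le)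
    linarith
  have e : ‖tco (1 + M) b n‖ = q n / q (n + M + 1) * (1 / ((M : ℝ) + n + 1)) := by
    have g1 : Complex.Gamma (1 + M + n) = ((M + n).factorial : ℂ) := by
      rw [← Complex.Gamma_nat_eq_factorial]; congr 1; push_cast; ring
    have g2 : (1 + M + b + n : ℂ) = b + ((n + M + 1 : ℕ) : ℂ) := by push_cast; ring
    have g3 : ((n + M + 1).factorial : ℝ) = (M + n + 1) * (M + n).factorial := by
      rw [Nat.factorial_succ, add_comm n M]; push_cast; ring
    have hf : (0 : ℝ) < n.factorial := by exact_mod_cast n.factorial_pos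
    have hf2 : (0 : ℝ) < (M + n).factorial := by exact_mod_cast (M + n).factorial_pos
    have hG : ‖Complex.Gamma (b + ((n + M + 1 : ℕ) : ℂ))‖ ≠ 0 :=
      norm_ne_zero_iff.mpr (Complex.Gamma_ne_zero (add_nat_ne_neg hb' _))
    rw [tco, g1, g2, norm_div, norm_mul, norm_mul, Complex.norm_natCast, Complex.norm_natCast]
    simp only [q]
    rw [g3]
    have : (M : ℝ) + n + 1 ≠ 0 := by positivity
    field_simp
  rw [e]
  have : q n / q (n + M + 1) ≤ 1 := (div_le_one (hq0 _)).mpr (hq (by omega))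
  exact mul_le_of_le_one_left (by positivity) this

/-- A summable bound, uniform in the shift `M`: the dominating tail lets the shifted sums tend
to `0` as `M → ∞`. -/
lemma exists_tco_sub_bound {a b : ℂ} (ha : 1 ≤ a.re) (hb : 1 ≤ b.re) :
    ∃ C : ℝ, 0 ≤ C ∧ ∀ M n : ℕ, ‖tco (a + M) b n - tco (1 + M) b n‖ ≤
      C * (1 / (((n + M : ℕ) : ℝ) + 1) ^ 2) := by
  have ha' : ∀ m : ℕ, a ≠ -m := ne_neg_nat_of_re_pos (by linarith)
  have hb' : ∀ m : ℕ, 1 + b ≠ -m := ne_neg_nat_of_re_pos (by simp; linarith)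
  have hab' : ∀ m : ℕ, a + b ≠ -m := ne_neg_nat_of_re_pos (by simp; linarith)
  have h1' : ∀ m : ℕ, (1 : ℂ) ≠ -m := ne_neg_nat_of_re_pos (by simp)
  -- `ρ (n + M)` is the ratio of the two coefficients: it depends on `n + M` only.
  set ρ : ℕ → ℂ := fun m => Complex.Gamma (a + m) * Complex.Gamma (1 + b + m) /
    (Complex.Gamma (a + b + m) * Complex.Gamma (1 + m)) with hρdef
  have hρ : Tendsto ρ atTop (𝓝 1) :=
    (tendsto_add_atTop_iff_nat 1).mp (tendsto_Gamma_quot ha' hb' hab' h1' (by ring))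
  obtain ⟨B, hB⟩ := hρ.norm.bddAbove_range
  have hB' : ∀ m, ‖ρ m‖ ≤ B := fun m => hB ⟨m, rfl⟩
  have hB0 : 0 ≤ B := (norm_nonneg _).trans (hB' 0)
  set C := B * ‖(a - 1) * b‖
  have hC : 0 ≤ C := by positivity
  have hstep : ∀ m : ℕ, ρ (m + 1) - ρ m = ρ m * (((a - 1) * b) / ((a + b + m) * (1 + m))) := by
    intro m
    have x1 := add_nat_ne ha' m
    have x2 := add_nat_ne hb' m
    have x3 := add_nat_ne hab' m
    have x4 := add_nat_ne h1' m
    have y3 := Complex.Gamma_ne_zero (add_nat_ne_neg hab' m)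
    have y4 := Complex.Gamma_ne_zero (add_nat_ne_neg h1' m)
    simp only [hρdef]
    push_cast
    simp only [← add_assoc]
    rw [Complex.Gamma_add_one _ x1, Complex.Gamma_add_one _ x2, Complex.Gamma_add_one _ x3,
      Complex.Gamma_add_one _ x4]
    field_simp
    ring
  have hinc : ∀ m : ℕ, ‖ρ (m + 1) - ρ m‖ ≤ C * (1 / ((m : ℝ) + 1) - 1 / ((m : ℝ) + 2)) := by
    intro m
    rw [hstep, norm_mul, norm_div ((a - 1) * b)]
    have h1 : ((m : ℝ) + 2) * (m + 1) ≤ ‖(a + b + m) * (1 + (m : ℂ))‖ := by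
      rw [norm_mul]
      have r1 : (m : ℝ) + 2 ≤ ‖a + b + m‖ := by
        refine le_trans ?_ (Complex.re_le_norm _)
        simp; linarith
      have r2 : (m : ℝ) + 1 ≤ ‖1 + (m : ℂ)‖ := by
        refine le_trans ?_ (Complex.re_le_norm _)
        simp; linarith
      gcongr
    calc ‖ρ m‖ * (‖(a - 1) * b‖ / ‖(a + b + m) * (1 + (m : ℂ))‖)
        ≤ B * (‖(a - 1) * b‖ / (((m : ℝ) + 2) * (m + 1))) := by
          gcongr
          exact hB' m
      _ = _ := by simp only [C]; field_simp; ring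
  refine ⟨C, hC, fun M n => ?_⟩
  have hr := norm_sub_one_le hρ hC hinc (n + M)
  have ht := tco_one_add_nat_le hb M n
  have e : tco (a + M) b n - tco (1 + M) b n = tco (1 + M) b n * (ρ (n + M) - 1) := by
    have y0 := Complex.Gamma_ne_zero (add_nat_ne_neg h1' (n + M))
    have y1 := Complex.Gamma_ne_zero (add_nat_ne_neg hb' (n + M))
    have y2 := Complex.Gamma_ne_zero (add_nat_ne_neg hab' (n + M))
    have hf : (n.factorial : ℂ) ≠ 0 := by exact_mod_cast n.factorial_ne_zero
    simp only [tco, hρdef]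
    rw [show a + M + n = a + ((n + M : ℕ) : ℂ) by push_cast; ring,
      show a + M + b + n = a + b + ((n + M : ℕ) : ℂ) by push_cast; ring,
      show (1 : ℂ) + M + n = 1 + ((n + M : ℕ) : ℂ) by push_cast; ring,
      show 1 + M + b + n = 1 + b + ((n + M : ℕ) : ℂ) by push_cast; ring]
    field_simp
  rw [e, norm_mul]
  calc ‖tco (1 + M) b n‖ * ‖ρ (n + M) - 1‖
      ≤ (1 / ((M : ℝ) + n + 1)) * (C / (((n + M : ℕ) : ℝ) + 1)) := by gcongr
    _ = _ := by
      push_cast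
      rw [add_comm (M : ℝ) n]
      field_simp

/-- Let `S M` be the sum of `tco (a + M) b n - tco (1 + M) b n` over `n`. By telescoping,
`S (M + 1) - S M = 1/(M + 1) - 1/(a + M)`, and `S M → 0`; summing over `M` gives the digamma
series for `-S 0`. -/
lemma tendsto_sum_tco_sub {a b : ℂ} (ha : 1 ≤ a.re) (hb : 1 ≤ b.re) :
    Tendsto (fun N => ∑ n ∈ range N, (tco a b n - tco 1 b n)) atTop
      (𝓝 (-(cdigamma a + eulerGammaC))) := by
  obtain ⟨C, hC, hbound⟩ := exists_tco_sub_bound ha hb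
  have hs0 : Summable fun n : ℕ => C * (1 / ((n : ℝ) + 1) ^ 2) := by
    have := ((summable_nat_add_iff 1).mpr
      (Real.summable_one_div_nat_pow.mpr one_lt_two)).mul_left C
    refine this.congr fun n => ?_
    push_cast; rfl
  have hsM : ∀ M : ℕ, Summable fun n : ℕ => C * (1 / (((n + M : ℕ) : ℝ) + 1) ^ 2) := fun M =>
    (summable_nat_add_iff M).mpr hs0
  have hsum : ∀ M : ℕ, Summable fun n => tco (a + M) b n - tco (1 + M) b n := fun M =>
    Summable.of_norm_bounded (hsM M) (hbound M)
  set S : ℕ → ℂ := fun M => ∑' n, (tco (a + M) b n - tco (1 + M) b n) with hS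
  have hS0 : Tendsto S atTop (𝓝 0) := by
    refine squeeze_zero_norm (fun M => tsum_of_norm_bounded (hsM M).hasSum (hbound M)) ?_
    exact tendsto_sum_nat_add fun n : ℕ => C * (1 / ((n : ℝ) + 1) ^ 2)
  have hstep : ∀ M : ℕ, S (M + 1) - S M = 1 / ((M : ℂ) + 1) - 1 / (a + M) := by
    intro M
    have h1 := ((hsum (M + 1)).sub (hsum M)).hasSum.tendsto_sum_nat
    rw [Summable.tsum_sub (hsum (M + 1)) (hsum M)] at h1
    refine tendsto_nhds_unique h1 ?_
    have p : ∀ {c : ℂ}, 1 ≤ c.re → Tendsto (fun N => ∑ n ∈ range N,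
        (tco (c + M + 1) b n - tco (c + M) b n)) atTop (𝓝 (-(1 / (c + M)) * 1)) := by
      intro c hc
      have hM : (0 : ℝ) ≤ M := Nat.cast_nonneg M
      have z1 : ∀ m : ℕ, c + M ≠ -m := ne_neg_nat_of_re_pos (by simp; linarith)
      have z2 : ∀ m : ℕ, b ≠ -m := ne_neg_nat_of_re_pos (by linarith)
      have z3 : ∀ m : ℕ, c + M + b ≠ -m := ne_neg_nat_of_re_pos (by simp; linarith)
      exact ((tendsto_mul_tco z1 z2 z3).const_mul _).congr fun N => (sum_tco_shift z1 z2 z3 N).symm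
    have h2 := (p ha).sub (p (c := 1) (by simp))
    rw [show 1 / ((M : ℂ) + 1) - 1 / (a + M) = -(1 / (a + M)) * 1 - -(1 / (1 + (M : ℂ))) * 1 by
      rw [add_comm (M : ℂ) 1]; ring]
    refine h2.congr fun N => ?_
    rw [← sum_sub_distrib]
    refine sum_congr rfl fun n _ => ?_
    push_cast
    simp only [← add_assoc]
    ring
  have hdig := (hasSum_digamma ha).tendsto_sum_nat
  have hlim : Tendsto (fun N => S N - S 0) atTop (𝓝 (cdigamma a + eulerGammaC)) := by
    refine hdig.congr fun N => ?_
    rw [← sum_range_sub S N]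
    exact sum_congr rfl fun M _ => (hstep M).symm
  have hval : -(cdigamma a + eulerGammaC) = S 0 := by
    have := tendsto_nhds_unique hlim (hS0.sub_const (S 0))
    rw [this]; ring
  rw [hval]
  have := (hsum 0).hasSum.tendsto_sum_nat
  simpa [hS] using this

/-- The renormalised value at `1` of the series with coefficients `tco a b`. With the convention
`1 / 0 = 0` the subtracted series is that of `-log (1 - ξ)`. -/
lemma tendsto_sum_tco_of_re {a b : ℂ} (ha : 1 ≤ a.re) (hb : 1 ≤ b.re) :
    Tendsto (fun N => ∑ n ∈ range N, (tco a b n - 1 / (n : ℂ))) atTop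
      (𝓝 (-(cdigamma a + cdigamma b + 2 * eulerGammaC))) := by
  have h1 := tendsto_sum_tco_sub ha hb
  have h2 := (hasSum_digamma hb).tendsto_sum_nat
  have h3 := (tendsto_inv_atTop_nhds_zero_nat (𝕜 := ℂ))
  have h4 := (h1.sub h2).add h3
  rw [show -(cdigamma a + cdigamma b + 2 * eulerGammaC)
    = -(cdigamma a + eulerGammaC) - (cdigamma b + eulerGammaC) + 0 by ring]
  refine h4.congr fun N => ?_
  rw [← one_div, ← sum_inv_telescope, ← sum_sub_distrib, ← sum_add_distrib]
  refine sum_congr rfl fun n _ => ?_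
  have hb' : ∀ m : ℕ, b ≠ -m := ne_neg_nat_of_re_pos (by linarith)
  have e : tco 1 b n = 1 / (b + n) := by
    have x := add_nat_ne hb' n
    have y := Complex.Gamma_ne_zero (add_nat_ne_neg hb' n)
    have hf : (n.factorial : ℂ) ≠ 0 := by exact_mod_cast n.factorial_ne_zero
    rw [tco, show (1 : ℂ) + b + n = b + n + 1 by ring, Complex.Gamma_add_one _ x, add_comm (1 : ℂ),
      Complex.Gamma_nat_eq_factorial]
    field_simp
  rw [e]
  ring

/-- The renormalised value propagates from `a + 1` to `a`. -/
lemma tendsto_sum_tco_shift {a b : ℂ} (ha : ∀ m : ℕ, a ≠ -m) (hb : ∀ m : ℕ, b ≠ -m)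
    (hab : ∀ m : ℕ, a + b ≠ -m)
    (h : Tendsto (fun N => ∑ n ∈ range N, (tco (a + 1) b n - 1 / (n : ℂ))) atTop
      (𝓝 (-(cdigamma (a + 1) + cdigamma b + 2 * eulerGammaC)))) :
    Tendsto (fun N => ∑ n ∈ range N, (tco a b n - 1 / (n : ℂ))) atTop
      (𝓝 (-(cdigamma a + cdigamma b + 2 * eulerGammaC))) := by
  have h1 := h.sub ((tendsto_mul_tco ha hb hab).const_mul (-(1 / a)))
  rw [cdigamma_add_one ha] at h1
  rw [show -(cdigamma a + cdigamma b + 2 * eulerGammaC)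
    = -(cdigamma a + 1 / a + cdigamma b + 2 * eulerGammaC) - -(1 / a) * 1 by ring]
  refine h1.congr fun N => ?_
  rw [← sum_tco_shift ha hb hab, ← sum_sub_distrib]
  exact sum_congr rfl fun n _ => by ring

/-- The renormalised value at `1`, for all admissible `a`, `b`: reduction to real parts at least
`1` by unit shifts of both parameters. -/
lemma tendsto_sum_tco {a b : ℂ} (ha : ∀ m : ℕ, a ≠ -m) (hb : ∀ m : ℕ, b ≠ -m)
    (hab : ∀ m : ℕ, a + b ≠ -m) :
    Tendsto (fun N => ∑ n ∈ range N, (tco a b n - 1 / (n : ℂ))) atTop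
      (𝓝 (-(cdigamma a + cdigamma b + 2 * eulerGammaC))) := by
  have main : ∀ (k : ℕ) (a b : ℂ), (∀ m : ℕ, a ≠ -m) → (∀ m : ℕ, b ≠ -m) →
      (∀ m : ℕ, a + b ≠ -m) → 1 ≤ a.re + k → 1 ≤ b.re + k →
      Tendsto (fun N => ∑ n ∈ range N, (tco a b n - 1 / (n : ℂ))) atTop
        (𝓝 (-(cdigamma a + cdigamma b + 2 * eulerGammaC))) := by
    intro k
    induction k with
    | zero =>
      intro a b _ _ _ h1 h2
      exact tendsto_sum_tco_of_re (by simpa using h1) (by simpa using h2)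
    | succ k ih =>
      intro a b ha hb hab h1 h2
      have ha1 : ∀ m : ℕ, a + 1 ≠ -m := fun m => by simpa using add_nat_ne_neg ha 1 m
      have hb1 : ∀ m : ℕ, b + 1 ≠ -m := fun m => by simpa using add_nat_ne_neg hb 1 m
      have hab1 : ∀ m : ℕ, a + (b + 1) ≠ -m := fun m => by
        rw [← add_assoc]; simpa using add_nat_ne_neg hab 1 m
      have hab2 : ∀ m : ℕ, a + 1 + (b + 1) ≠ -m := fun m => by
        rw [show a + 1 + (b + 1) = a + b + (2 : ℕ) by push_cast; ring]
        exact add_nat_ne_neg hab 2 m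
      push_cast at h1 h2
      have h3 := tendsto_sum_tco_shift ha hb1 hab1
        (ih (a + 1) (b + 1) ha1 hb1 hab2 (by simp; linarith) (by simp; linarith))
      have h4 := tendsto_sum_tco_shift (a := b) (b := a) hb ha (by rwa [add_comm b a]) (by
        rw [add_comm (cdigamma (b + 1))]
        exact h3.congr fun N => sum_congr rfl fun n _ => by rw [tco_comm])
      rw [add_comm (cdigamma a)]
      exact h4.congr fun N => sum_congr rfl fun n _ => by rw [tco_comm]
  obtain ⟨k, hk⟩ := exists_nat_ge (max (1 - a.re) (1 - b.re))
  have h1 := (le_max_left _ _).trans hk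
  have h2 := (le_max_right _ _).trans hk
  exact main k a b ha hb hab (by linarith) (by linarith)

/-! ### Power series on the unit disc -/

/-- The sum of the power series with coefficients `p`. -/
noncomputable def PS (p : ℕ → ℂ) (x : ℂ) : ℂ := ∑' n, p n * x ^ n

/-- The power series with coefficients `p` has radius of convergence at least `1`. -/
def Adm (p : ℕ → ℂ) : Prop := ∀ r : ℝ, 0 < r → r < 1 → Summable fun n => ‖p n‖ * r ^ n

/-- The coefficients of the derived power series. -/
def dco (p : ℕ → ℂ) (n : ℕ) : ℂ := ((n : ℂ) + 1) * p (n + 1)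

lemma Adm.summable {p : ℕ → ℂ} (hp : Adm p) {x : ℂ} (hx : ‖x‖ < 1) :
    Summable fun n => p n * x ^ n := by
  obtain ⟨r, hr1, hr2⟩ := exists_between hx
  refine Summable.of_norm_bounded (hp r ((norm_nonneg x).trans_lt hr1) hr2) fun n => ?_
  rw [norm_mul, norm_pow]
  gcongr

lemma Adm.of_le {p q : ℕ → ℂ} (hp : Adm p) {C : ℝ}
    (h : ∀ n, ‖q n‖ ≤ C * (((n : ℝ) + 1) * ‖p n‖)) : Adm q := by
  intro r hr0 hr1
  obtain ⟨s, hs1, hs2⟩ := exists_between hr1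
  have hs0 : 0 < s := hr0.trans hs1
  have hlt : r / s < 1 := (div_lt_one hs0).mpr hs1
  have h1 : Tendsto (fun n : ℕ => (n : ℝ) * (r / s) ^ n + (r / s) ^ n) atTop (𝓝 (0 + 0)) :=
    (tendsto_self_mul_const_pow_of_lt_one (by positivity) hlt).add
      (tendsto_pow_atTop_nhds_zero_of_lt_one (by positivity) hlt)
  obtain ⟨B, hB⟩ := h1.bddAbove_range
  have hB' : ∀ n : ℕ, ((n : ℝ) + 1) * r ^ n ≤ B * s ^ n := by
    intro n
    have h2 : (n : ℝ) * (r / s) ^ n + (r / s) ^ n ≤ B := hB ⟨n, rfl⟩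
    have h3 : ((n : ℝ) + 1) * r ^ n = ((n : ℝ) * (r / s) ^ n + (r / s) ^ n) * s ^ n := by
      rw [div_pow]; field_simp
    rw [h3]
    gcongr
  refine Summable.of_nonneg_of_le (fun n => by positivity) (fun n => ?_)
    (((hp s hs0 hs2).mul_left (|C| * B)))
  calc ‖q n‖ * r ^ n ≤ (|C| * (((n : ℝ) + 1) * ‖p n‖)) * r ^ n := by
        gcongr
        exact (h n).trans (by gcongr; exact le_abs_self C)
    _ = |C| * ‖p n‖ * (((n : ℝ) + 1) * r ^ n) := by ring
    _ ≤ |C| * ‖p n‖ * (B * s ^ n) := mul_le_mul_of_nonneg_left (hB' n) (by positivity)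
    _ = _ := by ring

lemma Adm.nmul {p : ℕ → ℂ} (hp : Adm p) : Adm fun n => (n : ℂ) * p n := by
  refine hp.of_le (C := 1) fun n => ?_
  rw [norm_mul, Complex.norm_natCast, one_mul]
  gcongr
  linarith

lemma Adm.shift {p : ℕ → ℂ} (hp : Adm p) : Adm fun n => p (n + 1) := by
  intro r h0 h1
  have := ((summable_nat_add_iff 1).mpr (hp r h0 h1)).mul_left r⁻¹
  refine this.congr fun n => ?_
  rw [pow_succ]
  field_simp

lemma Adm.dco {p : ℕ → ℂ} (hp : Adm p) : Adm (dco p) := by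
  have := hp.nmul.shift
  refine this.of_le (C := 1) fun n => ?_
  simp only [_root_.dco]
  push_cast
  rw [one_mul]
  exact le_mul_of_one_le_left (norm_nonneg _) (by linarith [(Nat.cast_nonneg n : (0 : ℝ) ≤ n)])

lemma Adm.hasDerivAt {p : ℕ → ℂ} (hp : Adm p) {x : ℂ} (hx : ‖x‖ < 1) :
    HasDerivAt (PS p) (PS (_root_.dco p) x) x := by
  obtain ⟨r, hr1, hr2⟩ := exists_between hx
  have hr0 : 0 < r := (norm_nonneg x).trans_lt hr1
  have hu : Summable fun n : ℕ => r⁻¹ * (‖(n : ℂ) * p n‖ * r ^ n) := (hp.nmul r hr0 hr2).mul_left _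
  have hd : ∀ (n : ℕ) (z : ℂ), z ∈ Metric.ball (0 : ℂ) r →
      HasDerivAt (fun z => p n * z ^ n) (p n * (n * z ^ (n - 1))) z := fun n z _ =>
    (hasDerivAt_pow n z).const_mul (p n)
  have hb : ∀ (n : ℕ) (z : ℂ), z ∈ Metric.ball (0 : ℂ) r →
      ‖p n * (n * z ^ (n - 1))‖ ≤ r⁻¹ * (‖(n : ℂ) * p n‖ * r ^ n) := by
    intro n z hz
    have hz' : ‖z‖ ≤ r := by simpa using (Metric.mem_ball.mp hz).le
    rcases n with _ | n
    · simp
    · rw [Nat.add_sub_cancel, pow_succ r]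
      rw [norm_mul, norm_mul, norm_mul, norm_pow]
      have : r⁻¹ * (‖((n + 1 : ℕ) : ℂ)‖ * ‖p (n + 1)‖ * (r ^ n * r))
        = ‖p (n + 1)‖ * (‖((n + 1 : ℕ) : ℂ)‖ * r ^ n) := by field_simp
      rw [this]
      gcongr
  have h0 : Summable fun n => p n * (0 : ℂ) ^ n := hp.summable (by simp)
  have hxr : x ∈ Metric.ball (0 : ℂ) r := by simpa using hr1
  have h := hasDerivAt_tsum_of_isPreconnected hu Metric.isOpen_ball
    (convex_ball (0 : ℂ) r).isPreconnected hd hb (Metric.mem_ball_self hr0) h0 hxr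
  have hs : Summable fun n : ℕ => p n * (n * x ^ (n - 1)) :=
    Summable.of_norm_bounded hu fun n => hb n x hxr
  have e : PS (_root_.dco p) x = ∑' n : ℕ, p n * (n * x ^ (n - 1)) := by
    rw [hs.tsum_eq_zero_add, PS]
    simp only [_root_.dco, Nat.cast_zero, zero_mul, mul_zero, zero_add, Nat.add_sub_cancel]
    refine tsum_congr fun n => ?_
    push_cast; ring
  rw [e]
  exact h

lemma Adm.hasSum {p : ℕ → ℂ} (hp : Adm p) {x : ℂ} (hx : ‖x‖ < 1) :
    HasSum (fun n => p n * x ^ n) (PS p x) := (hp.summable hx).hasSum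

lemma hasSum_of_eq {f g : ℕ → ℂ} {s : ℂ} (e : ∀ n, f n = g n) (h : HasSum f s) : HasSum g s :=
  funext e ▸ h

/-- Multiplying by the variable shifts the coefficients. -/
lemma hasSum_mul_pow_pred {p q : ℕ → ℂ} (hq0 : q 0 = 0) (hq : ∀ n, q (n + 1) = p n) {x s : ℂ}
    (h : HasSum (fun n => p n * x ^ n) s) : HasSum (fun n => q n * x ^ n) (x * s) := by
  have h1 : HasSum (fun n => q (n + 1) * x ^ (n + 1)) (x * s) := by
    refine hasSum_of_eq (fun n => ?_) (h.mul_left x)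
    rw [hq, pow_succ]; ring
  have := (hasSum_nat_add_iff (f := fun n => q n * x ^ n) 1).mp h1
  simpa [hq0] using this

/-- The hypergeometric differential operator acts on a power series through the two-term
recurrence operator on its coefficients. -/
lemma hasSum_hyp_op {p : ℕ → ℂ} (hp : Adm p) (a b c : ℂ) {x : ℂ} (hx : ‖x‖ < 1) :
    HasSum (fun n : ℕ => (((n : ℂ) + 1) * (c + n) * p (n + 1) - (a + n) * (b + n) * p n) * x ^ n)
      (x * (1 - x) * PS (dco (dco p)) x + (c - (a + b + 1) * x) * PS (dco p) x
        - a * b * PS p x) := by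
  have h0 := hp.hasSum hx
  have h1 := hp.dco.hasSum hx
  have h2 := hp.dco.dco.hasSum hx
  have x1 : HasSum (fun n : ℕ => ((n : ℂ) * p n) * x ^ n) (x * PS (dco p) x) :=
    hasSum_mul_pow_pred (by simp) (fun n => by simp [dco]) h1
  have x2 : HasSum (fun n : ℕ => ((n : ℂ) * dco p n) * x ^ n) (x * PS (dco (dco p)) x) :=
    hasSum_mul_pow_pred (by simp) (fun n => by simp [dco]) h2
  have x3 : HasSum (fun n : ℕ => ((n : ℂ) * (n - 1) * p n) * x ^ n)
      (x * (x * PS (dco (dco p)) x)) :=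
    hasSum_mul_pow_pred (by simp) (fun n => by simp [dco]; ring) x2
  have h := (((x2.sub x3).add (h1.mul_left c)).sub (x1.mul_left (a + b + 1))).sub
    (h0.mul_left (a * b))
  rw [show x * (1 - x) * PS (dco (dco p)) x + (c - (a + b + 1) * x) * PS (dco p) x
        - a * b * PS p x = x * PS (dco (dco p)) x - x * (x * PS (dco (dco p)) x)
        + c * PS (dco p) x - (a + b + 1) * (x * PS (dco p) x) - a * b * PS p x by ring]
  refine hasSum_of_eq (fun n => ?_) h
  simp only [dco]
  ring

/-! ### A uniqueness lemma for the hypergeometric equation -/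

/-- The common domain of convergence of power series centred at `0` and at `1`. -/
def lens : Set ℂ := Metric.ball 0 1 ∩ Metric.ball 1 1

lemma lens_isOpen : IsOpen lens := Metric.isOpen_ball.inter Metric.isOpen_ball

lemma lens_convex : Convex ℝ lens := (convex_ball _ _).inter (convex_ball _ _)

lemma lens_norm {x : ℂ} (hx : x ∈ lens) : ‖x‖ < 1 := by simpa using hx.1

lemma lens_norm_sub {x : ℂ} (hx : x ∈ lens) : ‖1 - x‖ < 1 := by
  have := hx.2
  rwa [Metric.mem_ball, dist_comm, dist_eq_norm] at this

lemma lens_re {x : ℂ} (hx : x ∈ lens) : 0 < x.re := by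
  have h := (Complex.re_le_norm (1 - x)).trans_lt (lens_norm_sub hx)
  simp at h
  linarith

lemma lens_re_sub {x : ℂ} (hx : x ∈ lens) : 0 < (1 - x).re := by
  have h := (Complex.re_le_norm x).trans_lt (lens_norm hx)
  simp; linarith

lemma ofReal_mem_lens {t : ℝ} (h0 : 0 < t) (h1 : t < 1) : (t : ℂ) ∈ lens := by
  refine ⟨?_, ?_⟩
  · simp [abs_of_pos h0, h1]
  · rw [Metric.mem_ball, dist_comm, dist_eq_norm, ← Complex.ofReal_one, ← Complex.ofReal_sub,
      Complex.norm_real, Real.norm_eq_abs, abs_of_pos (by linarith)]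
    linarith

lemma eventually_mem_lens : ∀ᶠ t : ℝ in 𝓝[>] 0, (t : ℂ) ∈ lens := by
  filter_upwards [Ioo_mem_nhdsGT (zero_lt_one' ℝ)] with t ht
  exact ofReal_mem_lens ht.1 ht.2

/-- A solution of the hypergeometric equation near `x = 0` that tends to `0` and has `x D' → 0`
along the positive reals vanishes: its Wronskian with the regular solution `u` is identically
zero, so that it is a multiple of `u`. -/
lemma eq_zero_of_ode {s p : ℂ} {u u1 u2 D D1 D2 : ℂ → ℂ}
    (hu : ∀ x, ‖x‖ < 1 → HasDerivAt u (u1 x) x) (hu1 : ∀ x, ‖x‖ < 1 → HasDerivAt u1 (u2 x) x)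
    (hu0 : u 0 = 1)
    (ou : ∀ x, ‖x‖ < 1 → x * (1 - x) * u2 x + (1 - (s + 1) * x) * u1 x - p * u x = 0)
    (hD : ∀ x ∈ lens, HasDerivAt D (D1 x) x) (hD1 : ∀ x ∈ lens, HasDerivAt D1 (D2 x) x)
    (oD : ∀ x ∈ lens, x * (1 - x) * D2 x + (1 - (s + 1) * x) * D1 x - p * D x = 0)
    (lD : Tendsto (fun t : ℝ => D t) (𝓝[>] 0) (𝓝 0))
    (lD1 : Tendsto (fun t : ℝ => (t : ℂ) * D1 t) (𝓝[>] 0) (𝓝 0)) :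
    ∀ x ∈ lens, D x = 0 := by
  have hofR : Tendsto (fun t : ℝ => (t : ℂ)) (𝓝[>] 0) (𝓝 0) := by
    have := (Complex.continuous_ofReal.tendsto 0).mono_left (nhdsWithin_le_nhds (s := Set.Ioi 0))
    simpa using this
  have z0 : ‖(0 : ℂ)‖ < 1 := by simp
  have lu : Tendsto (fun t : ℝ => u t) (𝓝[>] 0) (𝓝 1) := by
    have := (hu 0 z0).continuousAt.tendsto.comp hofR
    rwa [hu0] at this
  have lu1 : Tendsto (fun t : ℝ => u1 t) (𝓝[>] 0) (𝓝 (u1 0)) :=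
    (hu1 0 z0).continuousAt.tendsto.comp hofR
  set W : ℂ → ℂ := fun x => (1 - x) ^ s * (x * (D1 x * u x - D x * u1 x)) with hW
  have hWd : ∀ x ∈ lens, HasDerivAt W 0 x := by
    intro x hx
    have hx1 := lens_norm hx
    have hne : (1 - x) ≠ 0 := fun h => by
      have := lens_re_sub hx; rw [h] at this; simp at this
    have h1 : HasDerivAt (fun x : ℂ => (1 - x) ^ s) (s * (1 - x) ^ (s - 1) * (-1)) x :=
      ((hasDerivAt_id x).const_sub 1).cpow_const (Or.inl (lens_re_sub hx))
    have h2 := h1.mul ((hasDerivAt_id x).mul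
      (((hD1 x hx).mul (hu x hx1)).sub ((hD x hx).mul (hu1 x hx1))))
    refine h2.congr_deriv ?_
    simp only [id, Pi.mul_apply, Pi.sub_apply]
    rw [Complex.cpow_sub _ _ hne, Complex.cpow_one]
    have e1 := oD x hx
    have e2 := ou x hx1
    field_simp
    linear_combination (1 - x) ^ s * ((u x) * e1 - (D x) * e2)
  obtain ⟨t0, ht0⟩ : ∃ t : ℝ, (t : ℂ) ∈ lens := ⟨1 / 2, ofReal_mem_lens (by norm_num) (by norm_num)⟩
  have hWdiff : DifferentiableOn ℂ W lens := fun x hx =>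
    (hWd x hx).differentiableAt.differentiableWithinAt
  have hconst : ∀ x ∈ lens, W x = W t0 := fun x hx =>
    lens_isOpen.is_const_of_deriv_eq_zero lens_convex.isPreconnected hWdiff
      (fun y hy => (hWd y hy).deriv) hx ht0
  have lW : Tendsto (fun t : ℝ => W t) (𝓝[>] 0) (𝓝 0) := by
    have h1 : Tendsto (fun t : ℝ => (1 - (t : ℂ)) ^ s) (𝓝[>] 0) (𝓝 1) := by
      have : ContinuousAt (fun z : ℂ => (1 - z) ^ s) 0 :=
        ContinuousAt.cpow (by fun_prop) (by fun_prop) (by simp)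
      have := this.tendsto.comp hofR
      simpa [Function.comp_def] using this
    have h2 := h1.mul ((lD1.mul lu).sub ((hofR.mul lD).mul lu1))
    simp only [zero_mul, mul_zero, sub_zero, mul_one] at h2
    refine h2.congr fun t => ?_
    simp only [hW]; ring
  have hWt : W t0 = 0 := by
    refine tendsto_nhds_unique (tendsto_const_nhds.congr' ?_) lW
    filter_upwards [eventually_mem_lens] with t ht
    exact (hconst t ht).symm
  have hWr : ∀ x ∈ lens, D1 x * u x - D x * u1 x = 0 := by
    intro x hx
    have h := (hconst x hx).trans hWt
    have hne : (1 - x) ≠ 0 := fun h => by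
      have := lens_re_sub hx; rw [h] at this; simp at this
    have hx0 : x ≠ 0 := fun h => by
      have := lens_re hx; rw [h] at this; simp at this
    simp only [hW] at h
    rcases mul_eq_zero.mp h with h | h
    · exact absurd h (by simp [Complex.cpow_eq_zero_iff, hne])
    · exact (mul_eq_zero.mp h).resolve_left hx0
  -- Near the origin `u` does not vanish, so that `D / u` is constant there.
  obtain ⟨δ, hδ, hδu⟩ : ∃ δ > 0, ∀ x ∈ Metric.ball (0 : ℂ) δ, u x ≠ 0 :=
    Metric.eventually_nhds_iff_ball.mp
      ((hu 0 z0).continuousAt.eventually_ne (by rw [hu0]; exact one_ne_zero))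
  set V := lens ∩ Metric.ball (0 : ℂ) δ
  have hVo : IsOpen V := lens_isOpen.inter Metric.isOpen_ball
  have hVc : IsPreconnected V := (lens_convex.inter (convex_ball _ _)).isPreconnected
  have hVe : ∀ᶠ t : ℝ in 𝓝[>] 0, (t : ℂ) ∈ V := by
    filter_upwards [eventually_mem_lens, hofR.eventually (Metric.ball_mem_nhds 0 hδ)] with t h1 h2
    exact ⟨h1, h2⟩
  have hq : ∀ x ∈ V, HasDerivAt (fun x => D x / u x) 0 x := by
    intro x hx
    have h := (hD x hx.1).div (hu x (lens_norm hx.1)) (hδu x hx.2)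
    rwa [hWr x hx.1, zero_div] at h
  have lq : Tendsto (fun t : ℝ => D t / u t) (𝓝[>] 0) (𝓝 0) := by
    have := lD.div lu one_ne_zero
    rwa [zero_div] at this
  have hVz : ∀ x ∈ V, D x = 0 := by
    intro x hx
    have hc : ∀ y ∈ V, D y / u y = D x / u x := fun y hy =>
      hVo.is_const_of_deriv_eq_zero (f := fun x => D x / u x) hVc
        (fun z hz => (hq z hz).differentiableAt.differentiableWithinAt)
        (fun z hz => (hq z hz).deriv) hy hx
    have : D x / u x = 0 := by
      refine tendsto_nhds_unique (tendsto_const_nhds.congr' ?_) lq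
      filter_upwards [hVe] with t ht
      exact (hc t ht).symm
    exact (div_eq_zero_iff.mp this).resolve_right (hδu x hx.2)
  obtain ⟨t1, ht1⟩ := hVe.exists
  have hDa : AnalyticOnNhd ℂ D lens :=
    DifferentiableOn.analyticOnNhd
      (fun x hx => (hD x hx).differentiableAt.differentiableWithinAt) lens_isOpen
  exact hDa.eqOn_zero_of_preconnected_of_eventuallyEq_zero lens_convex.isPreconnected ht1.1
    (Filter.eventuallyEq_of_mem (hVo.mem_nhds ht1) hVz)

/-! ### The coefficients of the local solutions -/

lemma tendsto_inv_add_nat (s : ℂ) : Tendsto (fun n : ℕ => (s + n)⁻¹) atTop (𝓝 0) := by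
  refine tendsto_inv₀_cobounded.comp ?_
  rw [← tendsto_norm_atTop_iff_cobounded]
  refine tendsto_atTop_mono (f := fun n : ℕ => (n : ℝ) - ‖s‖) (fun n => ?_)
    (tendsto_atTop_add_const_right _ _ tendsto_natCast_atTop_atTop)
  have := norm_sub_le (s + n) s
  rw [add_sub_cancel_left, Complex.norm_natCast] at this
  linarith

lemma one_ne_neg_nat (m : ℕ) : (1 : ℂ) ≠ -m := ne_neg_nat_of_re_pos (by simp) m

/-- The coefficients of `₂F₁(a,b;1;x)`. -/
noncomputable def cco (a b : ℂ) (n : ℕ) : ℂ := cpoch a n * cpoch b n / (n.factorial : ℂ) ^ 2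

/-- The digamma factor in the coefficients of the non-logarithmic part of the second solution. -/
noncomputable def kco (a b : ℂ) (n : ℕ) : ℂ :=
  cdigamma (a + n) + cdigamma (b + n) - 2 * cdigamma (1 + n)

/-- The coefficients of the non-logarithmic part of the second solution at `x = 0`. -/
noncomputable def eco (a b : ℂ) (n : ℕ) : ℂ := cco a b n * kco a b n

lemma cpoch_succ (u : ℂ) (n : ℕ) : cpoch u (n + 1) = cpoch u n * (u + n) :=
  Finset.prod_range_succ _ _

lemma cpoch_ne_zero {s : ℂ} (hs : ∀ m : ℕ, s ≠ -m) (n : ℕ) : cpoch s n ≠ 0 :=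
  Finset.prod_ne_zero_iff.mpr fun j _ => add_nat_ne hs j

lemma cco_zero (a b : ℂ) : cco a b 0 = 1 := by simp [cco, cpoch]

lemma cco_ne_zero {a b : ℂ} (ha : ∀ m : ℕ, a ≠ -m) (hb : ∀ m : ℕ, b ≠ -m) (n : ℕ) :
    cco a b n ≠ 0 :=
  div_ne_zero (mul_ne_zero (cpoch_ne_zero ha n) (cpoch_ne_zero hb n))
    (pow_ne_zero _ (Nat.cast_ne_zero.mpr n.factorial_ne_zero))

lemma cco_succ (a b : ℂ) (n : ℕ) :
    ((n : ℂ) + 1) * (1 + n) * cco a b (n + 1) = (a + n) * (b + n) * cco a b n := by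
  have h1 : ((n : ℂ) + 1) ≠ 0 := n.cast_add_one_ne_zero
  have h2 : (n.factorial : ℂ) ≠ 0 := Nat.cast_ne_zero.mpr n.factorial_ne_zero
  simp only [cco, cpoch_succ, Nat.factorial_succ]
  push_cast
  field_simp
  ring

lemma kco_succ {a b : ℂ} (ha : ∀ m : ℕ, a ≠ -m) (hb : ∀ m : ℕ, b ≠ -m) (n : ℕ) :
    kco a b (n + 1) = kco a b n + (1 / (a + n) + 1 / (b + n) - 2 * (1 / (1 + n))) := by
  have h1 := cdigamma_add_one (add_nat_ne_neg ha n)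
  have h2 := cdigamma_add_one (add_nat_ne_neg hb n)
  have h3 := cdigamma_add_one (add_nat_ne_neg one_ne_neg_nat n)
  simp only [kco]
  push_cast
  rw [← add_assoc, ← add_assoc, ← add_assoc, h1, h2, h3]
  ring

lemma eco_succ {a b : ℂ} (ha : ∀ m : ℕ, a ≠ -m) (hb : ∀ m : ℕ, b ≠ -m) (n : ℕ) :
    ((n : ℂ) + 1) * (1 + n) * eco a b (n + 1) = (a + n) * (b + n) * eco a b n
      + (a + b + 2 * n) * cco a b n - 2 * (((n : ℂ) + 1) * cco a b (n + 1)) := by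
  have h := cco_succ a b n
  have h1 := add_nat_ne ha n
  have h2 := add_nat_ne hb n
  have h3 := add_nat_ne one_ne_neg_nat n
  have e1 : (a + n) * (b + n) * (1 / (a + n) + 1 / (b + n)) = a + b + 2 * n := by
    field_simp; ring
  have e2 : (1 + n : ℂ) * (1 / (1 + n)) = 1 := by field_simp
  simp only [eco]
  rw [kco_succ ha hb]
  linear_combination (kco a b n + (1 / (a + n) + 1 / (b + n))) * h + cco a b n * e1
    - 2 * ((n : ℂ) + 1) * cco a b (n + 1) * e2

lemma adm_cco {a b : ℂ} (ha : ∀ m : ℕ, a ≠ -m) (hb : ∀ m : ℕ, b ≠ -m) : Adm (cco a b) := by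
  intro r h0 h1
  refine summable_of_ratio_test_tendsto_lt_one h1
    (Eventually.of_forall fun n => ?_) ?_
  · exact mul_ne_zero (norm_ne_zero_iff.mpr (cco_ne_zero ha hb n)) (pow_ne_zero _ h0.ne')
  have key : ∀ s : ℂ, Tendsto (fun n : ℕ => (s + n) / (1 + n)) atTop (𝓝 1) := by
    intro s
    have := ((tendsto_inv_add_nat 1).const_mul (s - 1)).const_add 1
    rw [mul_zero, add_zero] at this
    refine this.congr fun n => ?_
    have h3 := add_nat_ne one_ne_neg_nat n
    field_simp
    ring
  have h2 := (((key a).mul (key b)).norm).mul_const r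
  rw [one_mul, norm_one, one_mul] at h2
  refine h2.congr fun n => ?_
  have h3 := add_nat_ne one_ne_neg_nat n
  have e : cco a b (n + 1) = ((a + n) / (1 + n) * ((b + n) / (1 + n))) * cco a b n := by
    have := cco_succ a b n
    field_simp
    linear_combination this
  rw [e]
  have := norm_ne_zero_iff.mpr (cco_ne_zero ha hb n)
  generalize (a + n) / (1 + n) * ((b + n) / (1 + n)) = q
  simp only [norm_mul, norm_norm, norm_pow, Real.norm_of_nonneg h0.le, pow_succ]
  field_simp

lemma exists_norm_kco_le {a b : ℂ} (ha : ∀ m : ℕ, a ≠ -m) (hb : ∀ m : ℕ, b ≠ -m) :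
    ∃ C, ∀ n : ℕ, ‖kco a b n‖ ≤ C * ((n : ℝ) + 1) := by
  have h := (((tendsto_inv_add_nat a).add (tendsto_inv_add_nat b)).sub
    ((tendsto_inv_add_nat 1).const_mul 2)).norm
  obtain ⟨B, hB⟩ := h.bddAbove_range
  refine ⟨‖kco a b 0‖ + B, fun n => ?_⟩
  induction n with
  | zero =>
    have h0 : _ ≤ B := hB ⟨0, rfl⟩
    have : 0 ≤ B := (norm_nonneg _).trans h0
    push_cast; linarith
  | succ n ih =>
    have h0 : ‖(a + n)⁻¹ + (b + n)⁻¹ - 2 * (1 + n : ℂ)⁻¹‖ ≤ B := hB ⟨n, rfl⟩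
    rw [kco_succ ha hb]
    simp only [one_div]
    refine (norm_add_le _ _).trans ?_
    push_cast
    linarith [norm_nonneg (kco a b 0)]

lemma adm_eco {a b : ℂ} (ha : ∀ m : ℕ, a ≠ -m) (hb : ∀ m : ℕ, b ≠ -m) : Adm (eco a b) := by
  obtain ⟨C, hC⟩ := exists_norm_kco_le ha hb
  refine (adm_cco ha hb).of_le (C := C) fun n => ?_
  rw [eco, norm_mul]
  calc _ ≤ ‖cco a b n‖ * (C * ((n : ℝ) + 1)) := by gcongr; exact hC n
    _ = _ := by ring

lemma adm_tco {a b : ℂ} (ha : ∀ m : ℕ, a ≠ -m) (hb : ∀ m : ℕ, b ≠ -m)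
    (hab : ∀ m : ℕ, a + b ≠ -m) : Adm (tco a b) := by
  obtain ⟨B, hB⟩ := (tendsto_mul_tco ha hb hab).norm.bddAbove_range
  intro r h0 h1
  rw [← summable_nat_add_iff 1]
  refine Summable.of_nonneg_of_le (fun n => by positivity) (fun n => ?_)
    (((summable_nat_add_iff 1).mpr (summable_geometric_of_lt_one h0.le h1)).mul_left B)
  have h2 : ‖((n + 1 : ℕ) : ℂ) * tco a b (n + 1)‖ ≤ B := hB ⟨n + 1, rfl⟩
  rw [norm_mul, Complex.norm_natCast] at h2
  gcongr
  refine le_trans ?_ h2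
  exact le_mul_of_one_le_left (norm_nonneg _) (by push_cast; linarith [(Nat.cast_nonneg n : (0 : ℝ) ≤ n)])

/-! ### The differential equations -/

lemma ode_y {a b : ℂ} (ha : ∀ m : ℕ, a ≠ -m) (hb : ∀ m : ℕ, b ≠ -m)
    (hab : ∀ m : ℕ, a + b ≠ -m) {x : ℂ} (hx : ‖x‖ < 1) :
    x * (1 - x) * PS (dco (dco (tco a b))) x
      + (a + b - (a + b + 1) * x) * PS (dco (tco a b)) x - a * b * PS (tco a b) x = 0 := by
  refine (hasSum_hyp_op (adm_tco ha hb hab) a b (a + b) hx).unique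
    (hasSum_of_eq (fun n => ?_) hasSum_zero)
  rw [tco_succ ha hb hab, sub_self, zero_mul]

lemma ode_u {a b : ℂ} (ha : ∀ m : ℕ, a ≠ -m) (hb : ∀ m : ℕ, b ≠ -m) {x : ℂ} (hx : ‖x‖ < 1) :
    x * (1 - x) * PS (dco (dco (cco a b))) x
      + (1 - (a + b + 1) * x) * PS (dco (cco a b)) x - a * b * PS (cco a b) x = 0 := by
  refine (hasSum_hyp_op (adm_cco ha hb) a b 1 hx).unique
    (hasSum_of_eq (fun n => ?_) hasSum_zero)
  rw [cco_succ, sub_self, zero_mul]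

lemma ode_v {a b : ℂ} (ha : ∀ m : ℕ, a ≠ -m) (hb : ∀ m : ℕ, b ≠ -m) {x : ℂ} (hx : ‖x‖ < 1) :
    x * (1 - x) * PS (dco (dco (eco a b))) x
      + (1 - (a + b + 1) * x) * PS (dco (eco a b)) x - a * b * PS (eco a b) x
      = (a + b) * PS (cco a b) x + 2 * (x * PS (dco (cco a b)) x) - 2 * PS (dco (cco a b)) x := by
  have hc := adm_cco ha hb
  have x1 : HasSum (fun n : ℕ => ((n : ℂ) * cco a b n) * x ^ n) (x * PS (dco (cco a b)) x) :=
    hasSum_mul_pow_pred (by simp) (fun n => by simp [dco]) (hc.dco.hasSum hx)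
  refine (hasSum_hyp_op (adm_eco ha hb) a b 1 hx).unique
    (hasSum_of_eq (fun n => ?_) ((((hc.hasSum hx).mul_left (a + b)).add
      (x1.mul_left 2)).sub ((hc.dco.hasSum hx).mul_left 2)))
  rw [eco_succ ha hb]
  simp only [dco]
  ring

/-! ### Behaviour at the singular point -/

lemma tendsto_one_sub_nhdsGT : Tendsto (fun t : ℝ => 1 - t) (𝓝[>] 0) (𝓝[<] 1) := by
  refine tendsto_nhdsWithin_iff.mpr ⟨?_, ?_⟩
  · have : Tendsto (fun t : ℝ => 1 - t) (𝓝 0) (𝓝 (1 - 0)) :=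
      tendsto_const_nhds.sub tendsto_id
    rw [sub_zero] at this
    exact this.mono_left nhdsWithin_le_nhds
  · filter_upwards [self_mem_nhdsWithin] with t ht
    simpa using ht

/-- Abel's limit theorem at `1 - t`. -/
lemma tendsto_PS_one_sub {f : ℕ → ℂ} {l : ℂ}
    (h : Tendsto (fun n => ∑ i ∈ range n, f i) atTop (𝓝 l)) :
    Tendsto (fun t : ℝ => PS f (1 - t)) (𝓝[>] 0) (𝓝 l) := by
  have h1 := (tendsto_map'_iff.mp (Complex.tendsto_tsum_powerSeries_nhdsWithin_lt h)).comp
    tendsto_one_sub_nhdsGT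
  refine h1.congr fun t => ?_
  simp [PS]

/-- Subtracting the logarithmic singularity, `y(1 - t) + log t` has the limit `-(ψ(a) + ψ(b) + 2γ)`. -/
lemma tendsto_y {a b : ℂ} (ha : ∀ m : ℕ, a ≠ -m) (hb : ∀ m : ℕ, b ≠ -m)
    (hab : ∀ m : ℕ, a + b ≠ -m) :
    Tendsto (fun t : ℝ => PS (tco a b) (1 - t) + Complex.log t) (𝓝[>] 0)
      (𝓝 (-(cdigamma a + cdigamma b + 2 * eulerGammaC))) := by
  refine (tendsto_PS_one_sub (tendsto_sum_tco ha hb hab)).congr' ?_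
  filter_upwards [eventually_mem_lens] with t ht
  have hx := lens_norm_sub ht
  have h1 := (adm_tco ha hb hab).hasSum hx
  have h2 := Complex.hasSum_taylorSeries_neg_log hx
  rw [sub_sub_cancel] at h2
  rw [← sub_neg_eq_add]
  refine HasSum.tsum_eq (hasSum_of_eq (fun n => ?_) (h1.sub h2))
  ring

lemma tendsto_dy {a b : ℂ} (ha : ∀ m : ℕ, a ≠ -m) (hb : ∀ m : ℕ, b ≠ -m)
    (hab : ∀ m : ℕ, a + b ≠ -m) :
    Tendsto (fun t : ℝ => (t : ℂ) * PS (dco (tco a b)) (1 - t)) (𝓝[>] 0) (𝓝 1) := by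
  have h : Tendsto (fun N => ∑ n ∈ range N, (((n + 1 : ℕ) : ℂ) * tco a b (n + 1)
      - (n : ℂ) * tco a b n)) atTop (𝓝 1) := by
    refine (tendsto_mul_tco ha hb hab).congr fun N => ?_
    rw [Finset.sum_range_sub (fun n : ℕ => (n : ℂ) * tco a b n)]
    simp
  refine (tendsto_PS_one_sub h).congr' ?_
  filter_upwards [eventually_mem_lens] with t ht
  have hx := lens_norm_sub ht
  have h1 := (adm_tco ha hb hab).dco.hasSum hx
  have x1 : HasSum (fun n : ℕ => ((n : ℂ) * tco a b n) * (1 - t : ℂ) ^ n) _ :=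
    hasSum_mul_pow_pred (by simp) (fun n => by simp [dco]) h1
  have e : (t : ℂ) * PS (dco (tco a b)) (1 - t) = PS (dco (tco a b)) (1 - t)
    - (1 - t) * PS (dco (tco a b)) (1 - t) := by ring
  rw [e]
  refine HasSum.tsum_eq (hasSum_of_eq (fun n => ?_) (h1.sub x1))
  simp only [dco]
  push_cast
  ring

lemma PS_zero (p : ℕ → ℂ) : PS p 0 = p 0 := by
  rw [PS, tsum_eq_single 0 fun n hn => by simp [hn]]
  simp

lemma kco_zero (a b : ℂ) : kco a b 0 = cdigamma a + cdigamma b + 2 * eulerGammaC := by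
  simp only [kco, eulerGammaC, Nat.cast_zero, add_zero]
  ring

lemma tendsto_mul_log : Tendsto (fun t : ℝ => (t : ℂ) * Complex.log t) (𝓝[>] 0) (𝓝 0) := by
  have h := ((Complex.continuous_ofReal.comp Real.continuous_mul_log).tendsto 0).mono_left
    (nhdsWithin_le_nhds (s := Set.Ioi 0))
  simp only [Function.comp_apply, zero_mul, Complex.ofReal_zero] at h
  refine h.congr' ?_
  filter_upwards [self_mem_nhdsWithin] with t ht
  simp only [Function.comp_apply]
  rw [Complex.ofReal_mul, Complex.ofReal_log (le_of_lt ht)]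

lemma tendsto_ofReal_nhdsGT : Tendsto (fun t : ℝ => (t : ℂ)) (𝓝[>] 0) (𝓝[≠] 0) := by
  refine tendsto_nhdsWithin_iff.mpr ⟨?_, ?_⟩
  · have := (Complex.continuous_ofReal.tendsto 0).mono_left (nhdsWithin_le_nhds (s := Set.Ioi 0))
    simpa using this
  · filter_upwards [self_mem_nhdsWithin] with t ht
    have : t ≠ 0 := ne_of_gt ht
    simpa using this

/-- The connection formula on the whole lens, with all series normalised so that no Gamma factor
occurs. -/
lemma y_add_eq_zero {a b : ℂ} (ha : ∀ m : ℕ, a ≠ -m) (hb : ∀ m : ℕ, b ≠ -m)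
    (hab : ∀ m : ℕ, a + b ≠ -m) {x : ℂ} (hx : x ∈ lens) :
    PS (tco a b) (1 - x) + (PS (cco a b) x * Complex.log x + PS (eco a b) x) = 0 := by
  have admt := adm_tco ha hb hab
  have ac := adm_cco ha hb
  have ae := adm_eco ha hb
  have z0 : ‖(0 : ℂ)‖ < 1 := by simp
  have hsub : ∀ {p : ℕ → ℂ}, Adm p → ∀ x ∈ lens,
      HasDerivAt (fun x => PS p (1 - x)) (-PS (dco p) (1 - x)) x := by
    intro p hp x hx
    have h := (hp.hasDerivAt (lens_norm_sub hx)).comp x ((hasDerivAt_id x).const_sub 1)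
    rwa [mul_neg_one] at h
  have hlog : ∀ x ∈ lens, HasDerivAt Complex.log x⁻¹ x := fun x hx =>
    Complex.hasDerivAt_log (Or.inl (lens_re hx))
  have hne : ∀ x ∈ lens, x ≠ 0 := fun x hx h => by
    have := lens_re hx; rw [h] at this; simp at this
  have hR := tendsto_ofReal_nhdsGT
  have hR0 := hR.mono_right nhdsWithin_le_nhds
  have lim : ∀ {p : ℕ → ℂ}, Adm p → Tendsto (fun t : ℝ => PS p t) (𝓝[>] 0) (𝓝 (p 0)) := by
    intro p hp
    have := (hp.hasDerivAt z0).continuousAt.tendsto.comp hR0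
    rwa [PS_zero] at this
  refine eq_zero_of_ode (s := a + b) (p := a * b)
    (D := fun x => PS (tco a b) (1 - x) + (PS (cco a b) x * Complex.log x + PS (eco a b) x))
    (D1 := fun x => -PS (dco (tco a b)) (1 - x) + ((PS (dco (cco a b)) x * Complex.log x
      + PS (cco a b) x * x⁻¹) + PS (dco (eco a b)) x))
    (D2 := fun x => - -PS (dco (dco (tco a b))) (1 - x)
      + (((PS (dco (dco (cco a b))) x * Complex.log x + PS (dco (cco a b)) x * x⁻¹)
      + (PS (dco (cco a b)) x * x⁻¹ + PS (cco a b) x * (-(x ^ 2)⁻¹))) + PS (dco (dco (eco a b))) x))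
    (fun x hx => ac.hasDerivAt hx) (fun x hx => ac.dco.hasDerivAt hx) ?_ (fun x hx => ode_u ha hb hx)
    ?_ ?_ ?_ ?_ ?_ x hx
  · rw [PS_zero, cco_zero]
  · intro x hx
    have hx1 := lens_norm hx
    exact (hsub admt x hx).add (((ac.hasDerivAt hx1).mul (hlog x hx)).add (ae.hasDerivAt hx1))
  · intro x hx
    have hx1 := lens_norm hx
    exact (hsub admt.dco x hx).neg.add ((((ac.dco.hasDerivAt hx1).mul (hlog x hx)).add
      ((ac.hasDerivAt hx1).mul (hasDerivAt_inv (hne x hx)))).add (ae.dco.hasDerivAt hx1))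
  · intro x hx
    have h1 := ode_y ha hb hab (lens_norm_sub hx)
    have h2 := ode_u ha hb (lens_norm hx)
    have h3 := ode_v ha hb (lens_norm hx)
    have h0 := hne x hx
    have e : x * x⁻¹ = 1 := mul_inv_cancel₀ h0
    have e2 : x * (x ^ 2)⁻¹ = x⁻¹ := by field_simp
    linear_combination h1 + Complex.log x * h2 + h3
      + (2 * (1 - x) * PS (dco (cco a b)) x + PS (cco a b) x - (a + b + 1) * PS (cco a b) x) * e
      - (1 - x) * PS (cco a b) x * e2
  · have l1 := tendsto_y ha hb hab
    have l2 : Tendsto (fun t : ℝ => (PS (cco a b) t - 1) * Complex.log t) (𝓝[>] 0) (𝓝 0) := by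
      have h := (hasDerivAt_iff_tendsto_slope_zero.mp (ac.hasDerivAt z0)).comp hR
      have h' := h.mul tendsto_mul_log
      rw [mul_zero] at h'
      refine h'.congr' ?_
      filter_upwards [eventually_mem_lens] with t ht
      have := hne _ ht
      simp only [Function.comp_apply, zero_add, smul_eq_mul, PS_zero, cco_zero]
      field_simp
    have l3 := lim ae
    have h := l1.add (l2.add l3)
    rw [eco, cco_zero, kco_zero, one_mul, zero_add, neg_add_cancel] at h
    refine h.congr fun t => ?_
    ring
  · have l1 := tendsto_dy ha hb hab
    have l2 := (lim ac.dco).mul tendsto_mul_log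
    have l3 := lim ac
    have l4 := hR0.mul (lim ae.dco)
    have h := l1.neg.add ((l2.add l3).add l4)
    rw [cco_zero, mul_zero, zero_mul, zero_add, add_zero, neg_add_cancel] at h
    refine h.congr' ?_
    filter_upwards [eventually_mem_lens] with t ht
    have := hne _ ht
    field_simp

/-! ### Matching the stated normalisation -/

lemma cpoch_one (n : ℕ) : cpoch 1 n = n.factorial := by
  induction n with
  | zero => simp [cpoch]
  | succ n ih => rw [cpoch_succ, ih, Nat.factorial_succ]; push_cast; ring

lemma hyp2F1_one (a b x : ℂ) : hyp2F1 a b 1 x = PS (cco a b) x := by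
  simp only [hyp2F1, PS, cco, cpoch_one, sq]

lemma hyp2F1_add {a b : ℂ} (ha : ∀ m : ℕ, a ≠ -m) (hb : ∀ m : ℕ, b ≠ -m)
    (hab : ∀ m : ℕ, a + b ≠ -m) (x : ℂ) :
    hyp2F1 a b (a + b) x
      = Complex.Gamma (a + b) / (Complex.Gamma a * Complex.Gamma b) * PS (tco a b) x := by
  rw [hyp2F1, PS, ← tsum_mul_left]
  refine tsum_congr fun n => ?_
  have h1 := Complex.Gamma_ne_zero ha
  have h2 := Complex.Gamma_ne_zero hb
  have h3 := Complex.Gamma_ne_zero hab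
  have h4 := cpoch_ne_zero hab n
  have h5 : (n.factorial : ℂ) ≠ 0 := Nat.cast_ne_zero.mpr n.factorial_ne_zero
  rw [tco, Gamma_add_nat ha, Gamma_add_nat hb, Gamma_add_nat hab]
  field_simp

/-- The bracket on the right-hand side of the connection formula. -/
lemma bracket_eq {a b : ℂ} (ha : ∀ m : ℕ, a ≠ -m) (hb : ∀ m : ℕ, b ≠ -m) {ξ : ℝ}
    (h0 : 0 < ξ) (h1 : ξ < 1) :
    (cdigamma a + cdigamma b + 2 * eulerGammaC) * hyp2F1 a b 1 ((1 - ξ : ℝ) : ℂ) + w21ln a b ξ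
      = PS (cco a b) ((1 - ξ : ℝ) : ℂ) * Complex.log ((1 - ξ : ℝ) : ℂ)
        + PS (eco a b) ((1 - ξ : ℝ) : ℂ) := by
  rw [w21ln, hyp2F1_one, ← Complex.ofReal_log (by linarith)]
  set x : ℂ := ((1 - ξ : ℝ) : ℂ)
  have hx : ‖x‖ < 1 := lens_norm (ofReal_mem_lens (by linarith) (by linarith))
  have hs := ((adm_eco ha hb).hasSum hx).sub
    (((adm_cco ha hb).hasSum hx).mul_left (cdigamma a + cdigamma b + 2 * eulerGammaC))
  have e := hs.summable.tsum_eq_zero_add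
  rw [hs.tsum_eq, eco, cco_zero, kco_zero] at e
  have e' : (∑' n : ℕ, cpoch a (n + 1) * cpoch b (n + 1) / (((n + 1).factorial : ℂ)) ^ 2 *
          x ^ (n + 1) * (cdigamma (a + ((n : ℂ) + 1)) - cdigamma a + cdigamma (b + ((n : ℂ) + 1)) -
          cdigamma b - 2 * cdigamma ((n : ℂ) + 2) - 2 * eulerGammaC))
      = ∑' n : ℕ, (eco a b (n + 1) * x ^ (n + 1)
        - (cdigamma a + cdigamma b + 2 * eulerGammaC) * (cco a b (n + 1) * x ^ (n + 1))) := by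
    refine tsum_congr fun n => ?_
    rw [eco, kco, cco, Nat.cast_add_one, show (1 : ℂ) + ((n : ℂ) + 1) = n + 2 by ring]
    ring
  rw [e']
  linear_combination -e

lemma sin_pi_ne_zero_of_not_int {a : ℂ} (ha : ∀ m : ℤ, a ≠ m) : Complex.sin (Real.pi * a) ≠ 0 := by
  rw [Ne, Complex.sin_eq_zero_iff]
  rintro ⟨k, hk⟩
  have hpi : (Real.pi : ℂ) ≠ 0 := Complex.ofReal_ne_zero.mpr Real.pi_ne_zero
  exact ha k (mul_left_cancel₀ hpi (by rw [hk, mul_comm]))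

lemma cot_add_cot {a b : ℂ} (ha : ∀ m : ℤ, a ≠ m) (hb : ∀ m : ℤ, b ≠ m) :
    Complex.cot (Real.pi * a) + Complex.cot (Real.pi * b)
      = Complex.sin (Real.pi * (a + b))
        / (Complex.sin (Real.pi * a) * Complex.sin (Real.pi * b)) := by
  have h1 := sin_pi_ne_zero_of_not_int ha
  have h2 := sin_pi_ne_zero_of_not_int hb
  rw [mul_add, Complex.sin_add, Complex.cot, Complex.cot]
  field_simp
  ring

/-- Three applications of the reflection formula. -/
lemma gamma_const_eq {a b : ℂ} (ha : ∀ m : ℤ, a ≠ m) (hb : ∀ m : ℤ, b ≠ m)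
    (hab : ∀ m : ℤ, a + b ≠ m) :
    Complex.Gamma (1 - a) * Complex.Gamma (1 - b) / (Complex.Gamma (1 - a - b) * (Real.pi : ℂ) *
        (Complex.cot (Real.pi * a) + Complex.cot (Real.pi * b)))
      = Complex.Gamma (a + b) / (Complex.Gamma a * Complex.Gamma b) := by
  have hpi : (Real.pi : ℂ) ≠ 0 := Complex.ofReal_ne_zero.mpr Real.pi_ne_zero
  have s1 := sin_pi_ne_zero_of_not_int ha
  have s2 := sin_pi_ne_zero_of_not_int hb
  have s3 := sin_pi_ne_zero_of_not_int hab
  have r1 := Complex.Gamma_mul_Gamma_one_sub a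
  have r2 := Complex.Gamma_mul_Gamma_one_sub b
  have r3 := Complex.Gamma_mul_Gamma_one_sub (a + b)
  have n1 : Complex.Gamma a * Complex.Gamma (1 - a) ≠ 0 := r1 ▸ div_ne_zero hpi s1
  have n2 : Complex.Gamma b * Complex.Gamma (1 - b) ≠ 0 := r2 ▸ div_ne_zero hpi s2
  have n3 : Complex.Gamma (a + b) * Complex.Gamma (1 - (a + b)) ≠ 0 := r3 ▸ div_ne_zero hpi s3
  have m1 := left_ne_zero_of_mul n1
  have m2 := left_ne_zero_of_mul n2
  have m3 := right_ne_zero_of_mul n3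
  rw [cot_add_cot ha hb, sub_sub]
  rw [eq_div_iff s1] at r1
  rw [eq_div_iff s2] at r2
  rw [eq_div_iff s3] at r3
  generalize Complex.Gamma (1 - (a + b)) = g at *
  generalize Complex.sin (Real.pi * (a + b)) = σ at *
  generalize Complex.sin (Real.pi * a) = α at *
  generalize Complex.sin (Real.pi * b) = β at *
  field_simp
  linear_combination (Complex.Gamma b * Complex.Gamma (1 - b) * β) * r1 + Real.pi * r2 - Real.pi * r3

/-- Connection formula expressing `w_{1,0}(ξ) = ₂F₁(a,b;a+b;ξ)` in terms of the
fundamental system `w_{1,1}(ξ) = ₂F₁(a,b;1;1-ξ)` and the logarithmic solution at `ξ = 1`. -/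
theorem hypergeometric_connection_w10 (a b : ℂ)
    (ha : ∀ m : ℤ, a ≠ (m : ℂ)) (hb : ∀ m : ℤ, b ≠ (m : ℂ))
    (hab : ∀ m : ℤ, a + b ≠ (m : ℂ))
    (ξ : ℝ) (hξ : ξ ∈ Set.Ioo (0 : ℝ) 1) :
    Complex.cot ((Real.pi : ℂ) * a) + Complex.cot ((Real.pi : ℂ) * b) ≠ 0 ∧
      hyp2F1 a b (a + b) ((ξ : ℝ) : ℂ) =
        -(Complex.Gamma (1 - a) * Complex.Gamma (1 - b) /
            (Complex.Gamma (1 - a - b) * (Real.pi : ℂ) *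
              (Complex.cot ((Real.pi : ℂ) * a) + Complex.cot ((Real.pi : ℂ) * b)))) *
          ((cdigamma a + cdigamma b + 2 * eulerGammaC) * hyp2F1 a b 1 ((1 - ξ : ℝ) : ℂ) +
            w21ln a b ξ) := by
  have cast : ∀ {s : ℂ}, (∀ m : ℤ, s ≠ m) → ∀ m : ℕ, s ≠ -m := fun h m e =>
    h (-m) (by rw [e]; push_cast; rfl)
  have ha' := cast ha
  have hb' := cast hb
  have hab' := cast hab
  refine ⟨?_, ?_⟩
  · rw [cot_add_cot ha hb]
    exact div_ne_zero (sin_pi_ne_zero_of_not_int hab)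
      (mul_ne_zero (sin_pi_ne_zero_of_not_int ha) (sin_pi_ne_zero_of_not_int hb))
  · have h := y_add_eq_zero ha' hb' hab'
      (ofReal_mem_lens (t := 1 - ξ) (by linarith [hξ.2]) (by linarith [hξ.1]))
    rw [show (1 : ℂ) - ((1 - ξ : ℝ) : ℂ) = ξ by push_cast; ring] at h
    rw [gamma_const_eq ha hb hab, bracket_eq ha' hb' hξ.1 hξ.2, hyp2F1_add ha' hb' hab']
    linear_combination Complex.Gamma (a + b) / (Complex.Gamma a * Complex.Gamma b) * h
end

section
/- Let β ∈ (-1,1)∖{0} and let w ∈ ℂ with w ∉ ℕ₀ and w+β ∉ ℕ₀. Then lim_{α→+∞} 2^{α+1} (2/α)^β · m̂_{α,β}(α·w) = Γ(-β)Γ(-w)/(Γ(β+1)Γ(-β-w)), where the limit is taken as the real parameter α tends to +∞ (in particular, m̂_{α,β}(αw) is defined with all Gamma arguments away from nonpositive integers for all sufficiently large α). -/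
/-!
With `σ = σ_{α,β}(αw)` and `A = 1 + α + β`, the identity `(σ - A)(σ + A) = 4αw` together with
`Re σ ≥ 0` forces `σ - A` to stay bounded, and then `σ - A → 2w` (`tendsto_sigmaAB_sub`). Hence the
Gamma arguments carrying `-σ` converge to `-w` and `-β - w`, where `Γ` is continuous, while those
carrying `+σ` are `α + c + β` and `α + c` with `c → 1 + w`.

For the latter pair, `α^{-β} Γ(α + c + β) / Γ(α + c) → 1` (`tendsto_Gamma_ratio`). When `β > 0` this
is the limit `α^β B(β, α + c) → Γ(β)` of `tendsto_rpow_mul_betaIntegral`: substituting `t = u / α`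
in the Beta integral gives `∫₀^α u^{β-1} (1 - u/α)^{α+c-1} du`, to which dominated convergence
applies. The case `β < 0` follows by shifting `c` by `β`.
-/

open Complex Filter

/-- Principal branch of the square root `σ_{α,β}(z) = ((1+α+β)^2 + 4z)^{1/2}`. -/
noncomputable def sigmaAB (α β : ℝ) (z : ℂ) : ℂ :=
  (((1 + α + β : ℝ) : ℂ) ^ 2 + 4 * z) ^ ((1 : ℂ) / 2)

/-- The Weyl–Titchmarsh–Kodaira function `m̂_{α,β}`. -/
noncomputable def mhat (α β : ℝ) (z : ℂ) : ℂ :=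
  -(Complex.Gamma (1 - (β : ℂ)) /
      ((((2 : ℝ) ^ (1 + α + β) : ℝ) : ℂ) * (β : ℂ) * Complex.Gamma (1 + (β : ℂ)))) *
    (Complex.Gamma ((1 + (α : ℂ) + (β : ℂ) + sigmaAB α β z) / 2) *
      Complex.Gamma ((1 + (α : ℂ) + (β : ℂ) - sigmaAB α β z) / 2)) /
    (Complex.Gamma ((1 + (α : ℂ) - (β : ℂ) + sigmaAB α β z) / 2) *
      Complex.Gamma ((1 + (α : ℂ) - (β : ℂ) - sigmaAB α β z) / 2))

open MeasureTheory Set Topology in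
/-- Asymptotics of the Beta function along `x → +∞`, with a convergent complex perturbation `c` of
the large argument. -/
theorem tendsto_rpow_mul_betaIntegral {b : ℝ} (hb : 0 < b) {c : ℝ → ℂ} {c₀ : ℂ}
    (hc : Tendsto c atTop (𝓝 c₀)) :
    Tendsto (fun x : ℝ => ((x ^ b : ℝ) : ℂ) * betaIntegral b (x + c x)) atTop
      (𝓝 (Complex.Gamma b)) := by
  let f : ℝ → ℝ → ℂ := fun x => indicator (Ioo 0 x) fun u : ℝ =>
    (u : ℂ) ^ ((b : ℂ) - 1) * (1 - ((u / x : ℝ) : ℂ)) ^ ((x : ℂ) + c x - 1)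
  -- For large `x` the exponent has real part at least `x / 2`, whence the bound by
  -- `u ^ (b - 1) * exp (-u / 2)`.
  have hlim : Tendsto (fun x => ∫ u in Ioi (0 : ℝ), f x u) atTop
      (𝓝 (∫ u in Ioi (0 : ℝ), ((Real.exp (-u) : ℝ) : ℂ) * (u : ℂ) ^ ((b : ℂ) - 1))) := by
    apply tendsto_integral_filter_of_dominated_convergence
      (fun u => u ^ (b - 1) * Real.exp (-(1 / 2) * u))
    · filter_upwards with x
      refine Measurable.aestronglyMeasurable ?_
      refine Measurable.indicator ?_ measurableSet_Ioo
      fun_prop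
    · have hre : Tendsto (fun x => (c x).re) atTop (𝓝 c₀.re) :=
        (continuous_re.tendsto _).comp hc
      filter_upwards [hre.eventually (lt_mem_nhds (sub_one_lt c₀.re)),
        eventually_ge_atTop (2 * (2 - c₀.re)), eventually_gt_atTop 0] with x h1 h2 h0
      rw [ae_restrict_iff' measurableSet_Ioi]
      filter_upwards with u hu
      have hu : 0 < u := hu
      by_cases hux : u < x
      · have h3 : 0 < 1 - u / x := by
          rw [sub_pos, div_lt_one h0]; exact hux
        have h4 : (1 - ((u / x : ℝ) : ℂ)) = ((1 - u / x : ℝ) : ℂ) := by push_cast; rfl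
        simp only [f]
        rw [indicator_of_mem (mem_Ioo.mpr ⟨hu, hux⟩), norm_mul, h4,
          norm_cpow_eq_rpow_re_of_pos hu, norm_cpow_eq_rpow_re_of_pos h3]
        simp only [sub_re, add_re, ofReal_re, one_re]
        gcongr
        calc (1 - u / x) ^ (x + (c x).re - 1) ≤ (1 - u / x) ^ (x / 2) := by
              apply Real.rpow_le_rpow_of_exponent_ge h3
              · have : 0 < u / x := by positivity
                linarith
              · linarith
          _ ≤ (Real.exp (-(u / x))) ^ (x / 2) := by
              gcongr
              linarith [Real.add_one_le_exp (-(u / x))]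
          _ = Real.exp (-(1 / 2) * u) := by
              rw [← Real.exp_mul]
              congr 1
              field_simp
      · simp only [f]
        rw [indicator_of_notMem (fun h => hux h.2), norm_zero]
        positivity
    · have := integrableOn_rpow_mul_exp_neg_mul_rpow (p := 1) (s := b - 1) (b := 1 / 2)
        (by linarith) one_pos (by norm_num)
      simpa [IntegrableOn] using this
    · rw [ae_restrict_iff' measurableSet_Ioi]
      filter_upwards with u hu
      have hu : 0 < u := hu
      have hg0 : Tendsto (fun x : ℝ => -((u / x : ℝ) : ℂ)) atTop (𝓝 0) := by
        have : Tendsto (fun x : ℝ => -(u / x)) atTop (𝓝 (-0)) :=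
          (tendsto_const_nhds.div_atTop tendsto_id).neg
        simpa [Function.comp_def] using (continuous_ofReal.tendsto _).comp this
      have hg : Tendsto (fun x : ℝ => (x : ℂ) * (-((u / x : ℝ) : ℂ))) atTop (𝓝 (-(u : ℂ))) := by
        apply tendsto_nhds_of_eventually_eq
        filter_upwards [eventually_ne_atTop 0] with x hx
        have : (x : ℂ) ≠ 0 := mod_cast hx
        push_cast
        field_simp
      have hl := tendsto_mul_log_one_add_of_tendsto hg
      have hl0 : Tendsto (fun x : ℝ => Complex.log (1 + -((u / x : ℝ) : ℂ))) atTop (𝓝 0) := by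
        have h1 : ContinuousAt Complex.log (1 + 0) := continuousAt_clog (by simp)
        simpa [Function.comp_def] using h1.tendsto.comp (hg0.const_add 1)
      have hexp : Tendsto (fun x : ℝ => Complex.exp ((x : ℂ) * Complex.log (1 + -((u / x : ℝ) : ℂ))
          + Complex.log (1 + -((u / x : ℝ) : ℂ)) * (c x - 1))) atTop
          (𝓝 (Complex.exp (-(u : ℂ)))) := by
        have := hl.add (hl0.mul (hc.sub_const 1))
        rw [zero_mul, add_zero] at this
        exact (Complex.continuous_exp.tendsto _).comp this
      rw [mul_comm]
      push_cast
      refine (hexp.const_mul ((u : ℂ) ^ ((b : ℂ) - 1))).congr' ?_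
      filter_upwards [eventually_gt_atTop u] with x hx
      have hne : (1 - ((u / x : ℝ) : ℂ)) ≠ 0 := by
        have : 1 - u / x ≠ 0 := by
          have : u / x < 1 := (div_lt_one (hu.trans hx)).2 hx
          linarith
        exact_mod_cast this
      simp only [f]
      rw [indicator_of_mem (mem_Ioo.mpr ⟨hu, hx⟩), cpow_def_of_ne_zero hne, ← sub_eq_add_neg]
      congr 2
      ring
  rw [Complex.Gamma_eq_integral (by simpa using hb)]
  refine hlim.congr' ?_
  filter_upwards [eventually_gt_atTop 0] with x hx
  have hx' : (x : ℂ) ≠ 0 := mod_cast hx.ne'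
  simp only [f]
  rw [MeasureTheory.integral_indicator measurableSet_Ioo,
    Measure.restrict_restrict_of_subset (fun _ h => h.1), ← integral_Ioc_eq_integral_Ioo,
    ← intervalIntegral.integral_of_le hx.le, betaIntegral]
  have hs := intervalIntegral.integral_comp_div (a := 0) (b := x) (c := x)
    (fun t : ℝ => (t : ℂ) ^ ((b : ℂ) - 1) * (1 - (t : ℂ)) ^ ((x : ℂ) + c x - 1)) hx.ne'
  rw [zero_div, div_self hx.ne'] at hs
  have hs' : (∫ t in (0 : ℝ)..1, (t : ℂ) ^ ((b : ℂ) - 1) * (1 - (t : ℂ)) ^ ((x : ℂ) + c x - 1))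
      = (x : ℂ)⁻¹ * ∫ u in (0 : ℝ)..x, ((u / x : ℝ) : ℂ) ^ ((b : ℂ) - 1) *
        (1 - ((u / x : ℝ) : ℂ)) ^ ((x : ℂ) + c x - 1) := by
    rw [hs, real_smul, inv_mul_cancel_left₀ hx']
  rw [hs', ← mul_assoc, ← intervalIntegral.integral_const_mul]
  apply intervalIntegral.integral_congr
  intro u hu
  rw [uIcc_of_le hx.le] at hu
  have hxb : ((x ^ b : ℝ) : ℂ) = (x : ℂ) ^ ((b : ℂ) - 1) * x := by
    rw [cpow_sub _ _ hx', cpow_one, div_mul_cancel₀ _ hx', ofReal_cpow hx.le]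
  have hu' : (u : ℂ) ^ ((b : ℂ) - 1)
      = ((u / x : ℝ) : ℂ) ^ ((b : ℂ) - 1) * (x : ℂ) ^ ((b : ℂ) - 1) := by
    rw [← mul_cpow_ofReal_nonneg (div_nonneg hu.1 hx.le) hx.le, ← ofReal_mul,
      div_mul_cancel₀ _ hx.ne']
  simp only [hxb, hu']
  field_simp

open Topology in
theorem tendsto_Gamma_ratio_of_pos {b : ℝ} (hb : 0 < b) {c : ℝ → ℂ} {c₀ : ℂ}
    (hc : Tendsto c atTop (𝓝 c₀)) :
    Tendsto (fun x : ℝ => ((x ^ b : ℝ) : ℂ) *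
      (Complex.Gamma (x + c x) / Complex.Gamma (x + c x + b))) atTop (𝓝 1) := by
  have hG : Complex.Gamma b ≠ 0 := Gamma_ne_zero_of_re_pos (by simpa using hb)
  have h := (tendsto_rpow_mul_betaIntegral hb hc).div_const (Complex.Gamma b)
  rw [div_self hG] at h
  refine h.congr' ?_
  have hre : Tendsto (fun x => (c x).re) atTop (𝓝 c₀.re) := (continuous_re.tendsto _).comp hc
  filter_upwards [(tendsto_id.atTop_add hre).eventually_gt_atTop 0] with x hx
  rw [betaIntegral_eq_Gamma_mul_div _ _ (by simpa using hb) (by simpa using hx), add_comm (b : ℂ)]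
  field_simp

open Topology in
/-- The leading term of Stirling's asymptotics for a Gamma quotient: `Γ(s + b) / Γ(s) ~ x^b` for
`s = x + c(x)` with `c` convergent. -/
theorem tendsto_Gamma_ratio {b : ℝ} (hb : b ≠ 0) {c : ℝ → ℂ} {c₀ : ℂ}
    (hc : Tendsto c atTop (𝓝 c₀)) :
    Tendsto (fun x : ℝ => ((x ^ (-b) : ℝ) : ℂ) *
      (Complex.Gamma (x + c x + b) / Complex.Gamma (x + c x))) atTop (𝓝 1) := by
  rcases hb.lt_or_gt with hb | hb
  · refine (tendsto_Gamma_ratio_of_pos (neg_pos.2 hb) (hc.add_const (b : ℂ))).congr fun x => ?_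
    push_cast
    rw [← add_assoc, add_neg_cancel_right]
  · have h := (tendsto_Gamma_ratio_of_pos hb hc).inv₀ one_ne_zero
    rw [inv_one] at h
    refine h.congr' ?_
    filter_upwards [eventually_ge_atTop 0] with x hx
    rw [mul_inv, inv_div, Real.rpow_neg hx, ofReal_inv]

open Topology in
/-- The expansion `σ_{α,β}(αw) = (1 + α + β) + 2w + o(1)` as `α → +∞`. -/
theorem tendsto_sigmaAB_sub (β : ℝ) (w : ℂ) :
    Tendsto (fun α : ℝ => sigmaAB α β ((α : ℂ) * w) - ((1 + α + β : ℝ) : ℂ)) atTop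
      (𝓝 (2 * w)) := by
  set δ : ℝ → ℂ := fun α => sigmaAB α β ((α : ℂ) * w) - ((1 + α + β : ℝ) : ℂ) with hδ
  have hsq : ∀ α : ℝ, δ α * (δ α + 2 * ((1 + α + β : ℝ) : ℂ)) = 4 * (α * w) := by
    intro α
    have h : sigmaAB α β ((α : ℂ) * w) ^ 2 = ((1 + α + β : ℝ) : ℂ) ^ 2 + 4 * (α * w) := by
      rw [sigmaAB, one_div, cpow_ofNat_inv_pow]
    simp only [hδ]
    linear_combination h
  -- The principal root has nonnegative real part, so `σ + A` cannot be smaller than `A`.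
  have hre : ∀ α : ℝ, 1 + α + β ≤ (δ α + 2 * ((1 + α + β : ℝ) : ℂ)).re := by
    intro α
    have h : 0 ≤ (sigmaAB α β ((α : ℂ) * w)).re := by
      rw [sigmaAB, one_div, cpow_inv_two_re]
      positivity
    have : δ α + 2 * ((1 + α + β : ℝ) : ℂ)
        = sigmaAB α β ((α : ℂ) * w) + ((1 + α + β : ℝ) : ℂ) := by
      simp only [hδ]; ring
    rw [this, add_re, ofReal_re]
    linarith
  have hbd : ∀ᶠ α : ℝ in atTop, ‖δ α‖ ≤ 8 * ‖w‖ := by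
    filter_upwards [eventually_gt_atTop 0, eventually_ge_atTop (-2 * (1 + β))] with α h0 h1
    have h2 : α / 2 ≤ ‖δ α + 2 * ((1 + α + β : ℝ) : ℂ)‖ :=
      le_trans (by linarith) ((hre α).trans (re_le_norm _))
    have h3 := congrArg norm (hsq α)
    simp only [norm_mul, norm_real, Real.norm_of_nonneg h0.le, RCLike.norm_ofNat] at h3
    have h4 : ‖δ α‖ * (α / 2) ≤ 4 * (α * ‖w‖) :=
      h3 ▸ mul_le_mul_of_nonneg_left h2 (norm_nonneg _)
    have h5 : α * ‖δ α‖ ≤ α * (8 * ‖w‖) := by linarith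
    exact le_of_mul_le_mul_left h5 h0
  have hinv : Tendsto (fun α : ℝ => ((α⁻¹ : ℝ) : ℂ)) atTop (𝓝 0) := by
    simpa [Function.comp_def] using (continuous_ofReal.tendsto _).comp tendsto_inv_atTop_zero
  have hq0 : Tendsto (fun α : ℝ => ((α⁻¹ : ℝ) : ℂ) * δ α) atTop (𝓝 0) :=
    hinv.zero_mul_isBoundedUnder_le ⟨8 * ‖w‖, by simpa using hbd⟩
  have hq : Tendsto (fun α : ℝ => ((α⁻¹ : ℝ) : ℂ) * δ α
      + 2 * (((α⁻¹ : ℝ) : ℂ) * (1 + β) + 1)) atTop (𝓝 2) := by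
    have := hq0.add (((hinv.mul_const (1 + (β : ℂ))).add_const 1).const_mul 2)
    simpa using this
  -- Dividing the quadratic relation by `α` exhibits `δ` as `4w / (2 + o(1))`.
  have hfin := (tendsto_const_nhds (x := 4 * w)).div hq two_ne_zero
  rw [show 4 * w / 2 = 2 * w by ring] at hfin
  refine hfin.congr' ?_
  filter_upwards [eventually_gt_atTop 0, hq.eventually_ne two_ne_zero] with α h0 hne
  have h0' : (α : ℂ) ≠ 0 := mod_cast h0.ne'
  simp only [Pi.div_apply]
  rw [div_eq_iff hne]
  have := hsq α
  push_cast at this ⊢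
  field_simp
  linear_combination -this

/-- The Laguerre `m`-function as a limit of rescaled Jacobi `m`-functions:
`2^{α+1}(2/α)^β m̂_{α,β}(αw) → Γ(-β)Γ(-w)/(Γ(β+1)Γ(-β-w))` as `α → +∞`. -/
theorem laguerre_m_limit_of_jacobi (β : ℝ) (hβ : β ∈ Set.Ioo (-1 : ℝ) 1) (hβ0 : β ≠ 0)
    (w : ℂ) (hw : ∀ n : ℕ, w ≠ (n : ℂ)) (hwβ : ∀ n : ℕ, w + (β : ℂ) ≠ (n : ℂ)) :
    Tendsto
      (fun α : ℝ =>
        (((2 : ℝ) ^ (α + 1) * (2 / α) ^ β : ℝ) : ℂ) * mhat α β ((α : ℂ) * w))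
      atTop
      (nhds (Complex.Gamma (-(β : ℂ)) * Complex.Gamma (-w) /
        (Complex.Gamma ((β : ℂ) + 1) * Complex.Gamma (-(β : ℂ) - w)))) := by
  set δ : ℝ → ℂ := fun α => sigmaAB α β ((α : ℂ) * w) - ((1 + α + β : ℝ) : ℂ) with hδdef
  have hδ : Tendsto (fun α => δ α / 2) atTop (nhds w) := by
    have := (tendsto_sigmaAB_sub β w).div_const 2
    rwa [mul_div_cancel_left₀ _ (two_ne_zero' ℂ)] at this
  have hσ : ∀ α : ℝ, sigmaAB α β ((α : ℂ) * w) = 1 + α + β + δ α := by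
    intro α
    simp only [hδdef]
    push_cast
    ring
  have hR := tendsto_Gamma_ratio hβ0 (hδ.const_add 1)
  have hN : Tendsto (fun α => Complex.Gamma (-(δ α / 2))) atTop (nhds (Complex.Gamma (-w))) :=
    (continuousAt_Gamma (-w) fun m h => hw m (neg_injective h)).tendsto.comp hδ.neg
  have hpole : ∀ m : ℕ, -(β : ℂ) - w ≠ -m := fun m h =>
    hwβ m (by linear_combination -h)
  have hD : Tendsto (fun α => Complex.Gamma (-(β : ℂ) - δ α / 2)) atTop
      (nhds (Complex.Gamma (-(β : ℂ) - w))) :=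
    (continuousAt_Gamma _ hpole).tendsto.comp (hδ.const_sub _)
  have hlim := ((hR.mul (hN.div hD (Gamma_ne_zero hpole))).const_mul
    (Complex.Gamma (-(β : ℂ)) / Complex.Gamma ((β : ℂ) + 1)))
  rw [one_mul, div_mul_div_comm] at hlim
  refine hlim.congr' ?_
  filter_upwards [eventually_gt_atTop 0] with α hα
  have hβc : (β : ℂ) ≠ 0 := mod_cast hβ0
  have hG : Complex.Gamma (1 - (β : ℂ)) = -β * Complex.Gamma (-(β : ℂ)) := by
    rw [← Gamma_add_one _ (neg_ne_zero.2 hβc), neg_add_eq_sub]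
  have hpow : (((2 : ℝ) ^ (α + 1) * (2 / α) ^ β : ℝ) : ℂ)
      = (((2 : ℝ) ^ (1 + α + β) : ℝ) : ℂ) * ((α ^ (-β) : ℝ) : ℂ) := by
    rw [← ofReal_mul, Real.div_rpow zero_le_two hα.le, Real.rpow_neg hα.le,
      Real.rpow_add two_pos (1 + α), add_comm α 1]
    ring_nf
  have h2 : (((2 : ℝ) ^ (1 + α + β) : ℝ) : ℂ) ≠ 0 :=
    mod_cast (Real.rpow_pos_of_pos two_pos _).ne'
  rw [mhat, hpow, hσ, hG,
    show (1 + (α : ℂ) + β + (1 + α + β + δ α)) / 2 = α + (1 + δ α / 2) + β by ring,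
    show (1 + (α : ℂ) + β - (1 + α + β + δ α)) / 2 = -(δ α / 2) by ring,
    show (1 + (α : ℂ) - β + (1 + α + β + δ α)) / 2 = α + (1 + δ α / 2) by ring,
    show (1 + (α : ℂ) - β - (1 + α + β + δ α)) / 2 = -β - δ α / 2 by ring,
    add_comm 1 (β : ℂ)]
  simp only [Pi.div_apply]
  field_simp
end
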